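/- arXiv:2404.19724 — 3 statements merged into one kernel-verified Lean document; each statement's English description precedes it below -/
import Mathlib

section
/- Robinson's theorem: There exists a first-order formula φ(x) with exactly one free variable in the language of rings such that, interpreting formulas in the field ℚ of rational numbers, for every q ∈ ℚ the formula φ(q) holds if and only if q is a natural number (i.e., q lies in the image of the canonical map ℕ → ℚ). -/
set_option maxHeartbeats 1000000 in
lemma leg_int (a b c : ℕ) (ha : 0 < a) (hb : 0 < b) (hc : 0 < c)
    (hab : Nat.Coprime a b) (hac : Nat.Coprime a c) (hbc : Nat.Coprime b c)
    (hns : ¬ IsSquare (a * b)) (α β γ : ℤ)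
    (h1 : (a : ℤ) ∣ b * α ^ 2 - c) (h2 : (b : ℤ) ∣ a * β ^ 2 - c)
    (h3 : (c : ℤ) ∣ a * γ ^ 2 + b) :
    ∃ X Y Z : ℤ, (X ≠ 0 ∨ Y ≠ 0 ∨ Z ≠ 0) ∧ a * X ^ 2 + b * Y ^ 2 = c * Z ^ 2 := by
  have : NeZero a := ⟨ha.ne'⟩
  have : NeZero b := ⟨hb.ne'⟩
  have : NeZero c := ⟨hc.ne'⟩
  set A := Nat.sqrt (b * c) with hA
  set B := Nat.sqrt (a * c) with hB
  set C := Nat.sqrt (a * b) with hC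
  let s : Finset (ℕ × ℕ × ℕ) := Finset.range (A + 1) ×ˢ Finset.range (B + 1) ×ˢ Finset.range (C + 1)
  let f : ℕ × ℕ × ℕ → ZMod a × ZMod b × ZMod c := fun q =>
    (((q.2.1 : ℤ) - α * q.2.2 : ℤ), ((q.1 : ℤ) - β * q.2.2 : ℤ), ((q.1 : ℤ) - γ * q.2.1 : ℤ))
  have hcard : (Finset.univ : Finset (ZMod a × ZMod b × ZMod c)).card < s.card := by
    simp only [s, Finset.card_product, Finset.card_range, Finset.card_univ, Fintype.card_prod,
      ZMod.card]
    have e1 : b * c < (A + 1) ^ 2 := Nat.lt_succ_sqrt' _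
    have e2 : a * c < (B + 1) ^ 2 := Nat.lt_succ_sqrt' _
    have e3 : a * b < (C + 1) ^ 2 := Nat.lt_succ_sqrt' _
    refine lt_of_pow_lt_pow_left₀ 2 (Nat.zero_le _) ?_
    calc (a * (b * c)) ^ 2 = (b * c) * ((a * c) * (a * b)) := by ring
      _ < (A + 1) ^ 2 * ((B + 1) ^ 2 * (C + 1) ^ 2) := by gcongr
      _ = _ := by ring
  obtain ⟨q, hq, q', hq', hne, hf⟩ :=
    Finset.exists_ne_map_eq_of_card_lt_of_maps_to (f := f) hcard (fun _ _ => Finset.mem_univ _)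
  obtain ⟨x, y, z⟩ := q
  obtain ⟨x', y', z'⟩ := q'
  simp only [s, Finset.mem_product, Finset.mem_range] at hq hq'
  simp only [f, Prod.mk.injEq, ZMod.intCast_eq_intCast_iff_dvd_sub] at hf
  obtain ⟨f1, f2, f3⟩ := hf
  obtain ⟨X, hX⟩ : ∃ X : ℤ, X = x' - x := ⟨_, rfl⟩
  obtain ⟨Y, hY⟩ : ∃ X : ℤ, X = y' - y := ⟨_, rfl⟩
  obtain ⟨Z, hZ⟩ : ∃ X : ℤ, X = z' - z := ⟨_, rfl⟩
  replace f1 : (a : ℤ) ∣ Y - α * Z := by convert f1 using 1; rw [hY, hZ]; ring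
  replace f2 : (b : ℤ) ∣ X - β * Z := by convert f2 using 1; rw [hX, hZ]; ring
  replace f3 : (c : ℤ) ∣ X - γ * Y := by convert f3 using 1; rw [hX, hY]; ring
  have hnz : X ≠ 0 ∨ Y ≠ 0 ∨ Z ≠ 0 := by
    by_contra! h
    apply hne
    simp only [Prod.mk.injEq]
    omega
  have bX : X ^ 2 ≤ b * c := by
    have : |X| ≤ A := by rw [abs_le]; omega
    have h := Nat.sqrt_le' (b * c)
    rw [← hA] at h
    have h' : (A : ℤ) ^ 2 ≤ b * c := by exact_mod_cast h
    rw [← sq_abs]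
    exact (pow_le_pow_left₀ (abs_nonneg _) this 2).trans h'
  have bY : Y ^ 2 ≤ a * c := by
    have : |Y| ≤ B := by rw [abs_le]; omega
    have h := Nat.sqrt_le' (a * c)
    rw [← hB] at h
    have h' : (B : ℤ) ^ 2 ≤ a * c := by exact_mod_cast h
    rw [← sq_abs]
    exact (pow_le_pow_left₀ (abs_nonneg _) this 2).trans h'
  have bZ : Z ^ 2 ≤ a * b := by
    have : |Z| ≤ C := by rw [abs_le]; omega
    have h := Nat.sqrt_le' (a * b)
    rw [← hC] at h
    have h' : (C : ℤ) ^ 2 ≤ a * b := by exact_mod_cast h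
    rw [← sq_abs]
    exact (pow_le_pow_left₀ (abs_nonneg _) this 2).trans h'
  have bZ' : Z ^ 2 ≠ a * b := by
    intro h
    apply hns
    refine ⟨Z.natAbs, ?_⟩
    zify
    rw [← sq, sq_abs]; exact h.symm
  have ha' : (0 : ℤ) < a := by exact_mod_cast ha
  have hb' : (0 : ℤ) < b := by exact_mod_cast hb
  have hc' : (0 : ℤ) < c := by exact_mod_cast hc
  obtain ⟨V, hV⟩ : ∃ V : ℤ, V = a * X ^ 2 + b * Y ^ 2 - c * Z ^ 2 := ⟨_, rfl⟩
  have d1 : (a : ℤ) ∣ V := by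
    obtain ⟨k, hk⟩ := f1
    obtain ⟨l, hl⟩ := h1
    have : Y = α * Z + a * k := by linarith
    refine ⟨X ^ 2 + b * (2 * α * Z * k + a * k ^ 2) + l * Z ^ 2, ?_⟩
    rw [hV, this]; linear_combination Z ^ 2 * hl
  have d2 : (b : ℤ) ∣ V := by
    obtain ⟨k, hk⟩ := f2
    obtain ⟨l, hl⟩ := h2
    have : X = β * Z + b * k := by linarith
    refine ⟨Y ^ 2 + a * (2 * β * Z * k + b * k ^ 2) + l * Z ^ 2, ?_⟩
    rw [hV, this]; linear_combination Z ^ 2 * hl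
  have d3 : (c : ℤ) ∣ V := by
    obtain ⟨k, hk⟩ := f3
    obtain ⟨l, hl⟩ := h3
    have : X = γ * Y + c * k := by linarith
    refine ⟨- Z ^ 2 + a * (2 * γ * Y * k + c * k ^ 2) + l * Y ^ 2, ?_⟩
    rw [hV, this]; linear_combination Y ^ 2 * hl
  have cab : IsCoprime (a : ℤ) b := Nat.isCoprime_iff_coprime.2 hab
  have cac : IsCoprime (a : ℤ) c := Nat.isCoprime_iff_coprime.2 hac
  have cbc : IsCoprime (b : ℤ) c := Nat.isCoprime_iff_coprime.2 hbc
  obtain ⟨k, hk⟩ : (a * b * c : ℤ) ∣ V :=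
    (cac.mul_left cbc).mul_dvd (cab.mul_dvd d1 d2) d3
  have habc : (0 : ℤ) < a * b * c := by positivity
  have up : V ≤ 2 * (a * b * c) := by
    have := mul_le_mul_of_nonneg_left bX ha'.le
    have := mul_le_mul_of_nonneg_left bY hb'.le
    have := mul_nonneg hc'.le (sq_nonneg Z)
    rw [hV]; linarith
  have lo : - (a * b * c) < V := by
    have := mul_lt_mul_of_pos_left (lt_of_le_of_ne bZ bZ') hc'
    have := mul_nonneg ha'.le (sq_nonneg X)
    have := mul_nonneg hb'.le (sq_nonneg Y)
    rw [hV]; linarith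
  have k1 : -1 < k := by
    by_contra! h
    have := mul_le_mul_of_nonneg_left h habc.le
    linarith
  have k2 : k ≤ 2 := by
    by_contra! h
    have := mul_le_mul_of_nonneg_left (Int.add_one_le_iff.2 h) habc.le
    linarith
  have hk' : k = 0 ∨ k = 1 ∨ k = 2 := by omega
  rcases hk' with rfl | rfl | rfl
  · exact ⟨X, Y, Z, hnz, by linarith⟩
  · refine ⟨X * Z + b * Y, Y * Z - a * X, Z ^ 2 + a * b, Or.inr (Or.inr (by positivity)), ?_⟩
    have : (a : ℤ) * X ^ 2 + b * Y ^ 2 = c * (Z ^ 2 + a * b) := by linarith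
    linear_combination (Z ^ 2 + a * b) * this
  · exfalso
    have q1 := mul_le_mul_of_nonneg_left bX ha'.le
    have q2 := mul_le_mul_of_nonneg_left bY hb'.le
    have q3 := mul_nonneg hc'.le (sq_nonneg Z)
    have q4 : (a : ℤ) * X ^ 2 = a * (b * c) := by linarith
    have q5 : (b : ℤ) * Y ^ 2 = b * (a * c) := by linarith
    have q6 := mul_left_cancel₀ ha'.ne' q4
    have q7 := mul_left_cancel₀ hb'.ne' q5
    have q8 : (X * Y) ^ 2 = (a * b) * (c : ℤ) ^ 2 := by rw [mul_pow, q6, q7]; ring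
    obtain ⟨w, hw⟩ : (c : ℤ) ∣ X * Y := by
      rw [← Int.pow_dvd_pow_iff two_ne_zero]
      exact ⟨a * b, by rw [q8]; ring⟩
    have q9 : w ^ 2 = a * b := by
      have : (c : ℤ) ^ 2 ≠ 0 := by positivity
      apply mul_left_cancel₀ this
      rw [hw] at q8
      linarith
    apply hns
    refine ⟨w.natAbs, ?_⟩
    zify
    rw [← sq, sq_abs]; exact q9.symm

lemma leg_rat (a b c : ℕ) (ha : 0 < a) (hb : 0 < b) (hc : 0 < c)
    (hab : Nat.Coprime a b) (hac : Nat.Coprime a c) (hbc : Nat.Coprime b c)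
    (hns : ¬ IsSquare (a * b)) (α β γ : ℤ)
    (h1 : (a : ℤ) ∣ b * α ^ 2 - c) (h2 : (b : ℤ) ∣ a * β ^ 2 - c)
    (h3 : (c : ℤ) ∣ a * γ ^ 2 + b) :
    ∃ x y : ℚ, a * x ^ 2 + b * y ^ 2 = c := by
  obtain ⟨X, Y, Z, hnz, h⟩ := leg_int a b c ha hb hc hab hac hbc hns α β γ h1 h2 h3
  have hZ : Z ≠ 0 := by
    rintro rfl
    have ha' : (0 : ℤ) < a := by exact_mod_cast ha
    have hb' : (0 : ℤ) < b := by exact_mod_cast hb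
    have u1 := mul_nonneg ha'.le (sq_nonneg X)
    have u2 := mul_nonneg hb'.le (sq_nonneg Y)
    have u3 : (a : ℤ) * X ^ 2 = 0 := by linarith
    have u4 : (b : ℤ) * Y ^ 2 = 0 := by linarith
    simp [ha.ne', hb.ne'] at u3 u4
    simp [u3, u4] at hnz
  refine ⟨X / Z, Y / Z, ?_⟩
  have hZ' : (Z : ℚ) ≠ 0 := by exact_mod_cast hZ
  have h' : (a : ℚ) * X ^ 2 + b * Y ^ 2 = c * Z ^ 2 := by exact_mod_cast h
  field_simp
  linarith

lemma find_t (p M τ N : ℕ) (hp : Odd p) (hM : Odd M) (hτ : Odd τ) (hpM : Nat.Coprime p M) :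
    ∃ t, N < t ∧ t.Prime ∧ t % 8 = τ % 8 ∧ (p : ℤ) ∣ t - 1 ∧ (M : ℤ) ∣ t + p := by
  have c8 : ∀ n : ℕ, Odd n → Nat.Coprime n 8 := by
    intro n hn
    exact (Nat.coprime_two_right.2 hn).pow_right 3
  have hM0 : 0 < M := hM.pos
  have hp0 : 0 < p := hp.pos
  obtain ⟨k1, h1, h1'⟩ := Nat.chineseRemainder hpM.symm (p * (M - 1)) 1
  obtain ⟨k2, h2, h2'⟩ := Nat.chineseRemainder (c8 (M * p) (hM.mul hp)) k1 τ
  have h2M : k2 ≡ p * (M - 1) [MOD M] := (h2.of_mul_right p).trans h1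
  have h2p : k2 ≡ 1 [MOD p] := (h2.of_mul_left M).trans h1'
  have hc : Nat.Coprime k2 (M * p * 8) := by
    refine Nat.Coprime.mul_right (Nat.Coprime.mul_right ?_ ?_) ?_
    · rw [Nat.Coprime, h2M.gcd_eq]
      refine Nat.Coprime.mul_left hpM ?_
      have := Nat.coprime_self_sub_left (n := M) (m := 1) hM0
      simpa using this
    · rw [Nat.Coprime, h2p.gcd_eq]; simp
    · rw [Nat.Coprime, h2'.gcd_eq]; exact c8 _ hτ
  obtain ⟨t, ht, htp, hte⟩ := Nat.forall_exists_prime_gt_and_modEq N (by positivity) hc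
  refine ⟨t, ht, htp, ((hte.of_mul_left (M * p)).trans h2'), ?_, ?_⟩
  · have : t ≡ 1 [MOD p] := ((hte.of_mul_right 8).of_mul_left M).trans h2p
    exact_mod_cast (Nat.modEq_iff_dvd.1 this.symm)
  · have : t ≡ p * (M - 1) [MOD M] := ((hte.of_mul_right 8).of_mul_right p).trans h2M
    have h := Nat.modEq_iff_dvd.1 this.symm
    rw [Nat.cast_mul, Nat.cast_sub hM0, Nat.cast_one] at h
    have h' := dvd_add h (Dvd.intro (p : ℤ) rfl : (M : ℤ) ∣ M * p)
    have e' : ((t : ℤ) - p * (M - 1)) + M * p = t + p := by ring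
    rw [e'] at h'
    exact h'

lemma core0 (p x t : ℕ) (hp : 0 < p) (hx : 0 < x) (ht : t.Prime) (hpt : p < t) (hxt : x < t)
    (hpx : Nat.Coprime p x) (h1 : (p : ℤ) ∣ t - 1) (h2 : (x : ℤ) ∣ t + p)
    (hsq : ∃ β : ℤ, (p : ℤ) ∣ β ^ 2 - x) (hJ : jacobiSym (p * x) t = 1) :
    ∃ y w : ℚ, t * y ^ 2 + p * w ^ 2 = x := by
  have : Fact t.Prime := ⟨ht⟩
  obtain ⟨β, hβ⟩ := hsq
  have ctp : Nat.Coprime t p := (Nat.coprime_of_lt_prime hp.ne' hpt ht)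
  have ctx : Nat.Coprime t x := (Nat.coprime_of_lt_prime hx.ne' hxt ht)
  have hs : IsSquare (((p * x : ℤ)) : ZMod t) := ZMod.isSquare_of_jacobiSym_eq_one hJ
  have hα : ∃ α : ℤ, (t : ℤ) ∣ p * α ^ 2 - x := by
    obtain ⟨s, hs⟩ := hs
    have hp0 : (p : ZMod t) ≠ 0 := by
      rw [Ne, ZMod.natCast_eq_zero_iff]
      exact fun h => absurd (Nat.le_of_dvd hp h) (by omega)
    obtain ⟨α, hα⟩ := ZMod.intCast_surjective (s / (p : ZMod t))
    refine ⟨α, ?_⟩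
    rw [← ZMod.intCast_eq_intCast_iff_dvd_sub]
    push_cast at hs ⊢
    rw [hα]
    field_simp
    rw [sq, ← hs]; ring
  obtain ⟨α, hα⟩ := hα
  refine leg_rat t p x ht.pos hp hx ctp ctx hpx ?_ α β 1 hα ?_ (by simpa using h2)
  · rintro ⟨k, hk⟩
    have : t ∣ k := by
      have : t ∣ k * k := ⟨p, hk.symm⟩
      rcases ht.dvd_mul.1 this with h | h <;> exact h
    obtain ⟨l, rfl⟩ := this
    have : p = t * (l * l) := by
      apply Nat.eq_of_mul_eq_mul_left ht.pos
      rw [hk]; ring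
    have : t ∣ p := ⟨_, this⟩
    exact absurd (Nat.le_of_dvd hp this) (by omega)
  · obtain ⟨u, hu⟩ := h1
    obtain ⟨v, hv⟩ := hβ
    refine ⟨u * β ^ 2 + v, ?_⟩
    linear_combination β ^ 2 * hu + hv

lemma jac_congr {a b : ℤ} {n : ℕ} (h : (n : ℤ) ∣ a - b) : jacobiSym a n = jacobiSym b n :=
  jacobiSym.mod_left' (Int.emod_eq_emod_iff_emod_sub_eq_zero.2 (Int.emod_eq_zero_of_dvd h))

lemma jac_pt (p t : ℕ) (hp : Odd p) (ht : Odd t) (h : t % 4 = 1 ∨ p % 4 = 1)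
    (h1 : (p : ℤ) ∣ t - 1) : jacobiSym p t = 1 := by
  have : jacobiSym t p = 1 := by rw [jac_congr h1]; simp
  rw [← this]
  rcases h with h | h
  · exact (jacobiSym.quadratic_reciprocity_one_mod_four h hp).symm
  · exact jacobiSym.quadratic_reciprocity_one_mod_four h ht

lemma core2 (p R m : ℕ) (hp : Odd p) (hR : Odd R) (hm : Odd m) (hpR : Nat.Coprime p R)
    (hpm : Nat.Coprime p m) (hsq : ∃ β : ℤ, (p : ℤ) ∣ β ^ 2 - (2 * m : ℕ)) :
    ∃ t, R < t ∧ t.Prime ∧ t % 4 = 1 ∧ (R : ℤ) ∣ t + p ∧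
      ∃ y w : ℚ, t * y ^ 2 + p * w ^ 2 = (2 * m : ℕ) := by
  have hJ1 : jacobiSym (-p) m = 1 ∨ jacobiSym (-p) m = -1 := by
    apply jacobiSym.eq_one_or_neg_one
    rw [Int.neg_gcd] 
    exact_mod_cast hpm
  obtain ⟨τ, hτ, hτ'⟩ : ∃ τ : ℕ, (τ = 1 ∨ τ = 5) ∧ ZMod.χ₈ (τ : ZMod 8) = jacobiSym (-p) m := by
    rcases hJ1 with h | h
    · exact ⟨1, Or.inl rfl, by rw [h]; decide⟩
    · exact ⟨5, Or.inr rfl, by rw [h]; decide⟩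
  obtain ⟨t, ht, htp, ht8, h1, h2⟩ := find_t p (m * R) τ (R + p + 2 * m) hp (hm.mul hR)
    (by rcases hτ with rfl | rfl <;> decide) (hpm.mul_right hpR)
  have h4 : t % 4 = 1 := by rcases hτ with rfl | rfl <;> omega
  have hto : Odd t := Nat.odd_iff.2 (by omega)
  push_cast at h2
  have h2m : (m : ℤ) ∣ t + p := (Dvd.intro _ rfl).trans h2
  refine ⟨t, by omega, htp, h4, (Dvd.intro_left _ rfl).trans h2, ?_⟩
  refine core0 p (2 * m) t hp.pos (by have := hm.pos; omega) htp (by omega) (by omega) ?_ h1 ?_ hsq ?_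
  · exact (Nat.coprime_two_right.2 hp).mul_right hpm
  · push_cast
    refine IsCoprime.mul_dvd ?_ ?_ h2m
    · have := Nat.isCoprime_iff_coprime.2 (Nat.coprime_two_left.2 hm)
      exact_mod_cast this
    · have := hto.add_odd hp
      exact_mod_cast this.two_dvd
  · push_cast
    rw [jacobiSym.mul_left, jacobiSym.mul_left, jac_pt p t hp hto (Or.inl h4) h1,
      jacobiSym.at_two hto, ← jacobiSym.quadratic_reciprocity_one_mod_four h4 hm]
    have e1 : ((t : ℕ) : ZMod 8) = (τ : ZMod 8) := (ZMod.natCast_eq_natCast_iff _ _ _).2 ht8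
    have e2 : jacobiSym t m = jacobiSym (-p) m := jac_congr (by simpa using h2m)
    rw [e1, hτ', e2]
    rcases hJ1 with h | h <;> rw [h] <;> rfl

lemma core1 (p R m τ : ℕ) (hp : Odd p) (hR : Odd R) (hm : Odd m) (hpR : Nat.Coprime p R)
    (hpm : Nat.Coprime p m) (hsq : ∃ β : ℤ, (p : ℤ) ∣ β ^ 2 - m)
    (hc : (τ = 1 ∧ jacobiSym (-p) m = 1) ∨
      (τ = 3 ∧ p % 4 = 1 ∧ m % 4 = 3 ∧ jacobiSym (-p) m = -1)) :
    ∃ t, R < t ∧ t.Prime ∧ t % 4 = τ ∧ (R : ℤ) ∣ t + p ∧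
      ∃ y w : ℚ, t * y ^ 2 + p * w ^ 2 = m := by
  obtain ⟨t, ht, htp, ht8, h1, h2⟩ := find_t p (m * R) τ (R + p + 2 * m) hp (hm.mul hR)
    (by rcases hc with ⟨rfl, _⟩ | ⟨rfl, _⟩ <;> decide) (hpm.mul_right hpR)
  have h4 : t % 4 = τ := by rcases hc with ⟨rfl, _⟩ | ⟨rfl, _⟩ <;> omega
  have hto : Odd t := Nat.odd_iff.2 (by rcases hc with ⟨rfl, _⟩ | ⟨rfl, _⟩ <;> omega)
  push_cast at h2
  have h2m : (m : ℤ) ∣ t + p := (Dvd.intro _ rfl).trans h2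
  refine ⟨t, by omega, htp, h4, (Dvd.intro_left _ rfl).trans h2, ?_⟩
  refine core0 p m t hp.pos hm.pos htp (by omega) (by omega) hpm h1 h2m hsq ?_
  have e2 : jacobiSym t m = jacobiSym (-p) m := jac_congr (by simpa using h2m)
  rw [jacobiSym.mul_left]
  rcases hc with ⟨rfl, h⟩ | ⟨rfl, hp4, hm4, h⟩
  · rw [jac_pt p t hp hto (Or.inl h4) h1,
      ← jacobiSym.quadratic_reciprocity_one_mod_four h4 hm, e2, h]; rfl
  · rw [jac_pt p t hp hto (Or.inr hp4) h1,
      jacobiSym.quadratic_reciprocity_three_mod_four hm4 h4, e2, h]; rfl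

lemma jac_neg (r t : ℕ) (hr : r % 4 = 3) (ht : Odd t) : jacobiSym (-r) t = jacobiSym t r := by
  have hro : Odd r := Nat.odd_iff.2 (by omega)
  have e : jacobiSym (-r) t = jacobiSym (-1) t * jacobiSym r t := by
    rw [← jacobiSym.mul_left]; congr 1; ring
  rw [e, jacobiSym.at_neg_one ht]
  have : t % 4 = 1 ∨ t % 4 = 3 := by have := Nat.odd_iff.1 ht; omega
  rcases this with h | h
  · rw [ZMod.χ₄_nat_one_mod_four h, one_mul]
    exact (jacobiSym.quadratic_reciprocity_one_mod_four h hro).symm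
  · rw [ZMod.χ₄_nat_three_mod_four h, jacobiSym.quadratic_reciprocity_three_mod_four hr h]
    ring

lemma sq_of_jac {a : ℤ} {n : ℕ} (hn : n.Prime) (h : jacobiSym a n = 1) :
    ∃ β : ℤ, (n : ℤ) ∣ β ^ 2 - a := by
  have : Fact n.Prime := ⟨hn⟩
  obtain ⟨s, hs⟩ := ZMod.isSquare_of_jacobiSym_eq_one h
  obtain ⟨β, rfl⟩ := ZMod.intCast_surjective s
  refine ⟨β, ?_⟩
  rw [← ZMod.intCast_eq_intCast_iff_dvd_sub]
  push_cast
  rw [hs, sq]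

lemma jac_of_sq {a : ℤ} {n : ℕ} (hn : n.Prime) (h : ∃ β : ℤ, (n : ℤ) ∣ β ^ 2 - a)
    (ha : ¬ (n : ℤ) ∣ a) : jacobiSym a n = 1 := by
  have : Fact n.Prime := ⟨hn⟩
  rw [← jacobiSym.legendreSym.to_jacobiSym, legendreSym.eq_one_iff]
  · obtain ⟨β, hβ⟩ := h
    rw [← ZMod.intCast_eq_intCast_iff_dvd_sub] at hβ
    refine ⟨β, ?_⟩
    push_cast at hβ
    rw [hβ, sq]
  · rwa [Ne, ZMod.intCast_zmod_eq_zero_iff_dvd]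

lemma rep_of_t (p r x t : ℕ) (hr : r.Prime) (hr4 : r % 4 = 3)
    (hpr : jacobiSym (-p) r = 1) (ht : t.Prime) (hto : Odd t) (hrt : r < t)
    (h2 : (r : ℤ) ∣ t + p) (h : ∃ y w : ℚ, t * y ^ 2 + p * w ^ 2 = x) :
    ∃ u v w : ℚ, u ^ 2 + r * v ^ 2 + p * w ^ 2 = x := by
  have e2 : jacobiSym t r = jacobiSym (-p) r := jac_congr (by simpa using h2)
  obtain ⟨β, hβ⟩ := sq_of_jac hr (e2.trans hpr)
  obtain ⟨γ, hγ⟩ := sq_of_jac ht ((jac_neg r t hr4 hto).trans (e2.trans hpr))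
  obtain ⟨a, b, hab⟩ := leg_rat 1 r t one_pos hr.pos ht.pos (by simp) (by simp)
    (Nat.coprime_of_lt_prime hr.ne_zero hrt ht).symm
    (by rw [one_mul]; exact hr.prime.not_isSquare) 0 β γ (by simp) (by simpa using hβ)
    (by simpa using hγ)
  obtain ⟨y, w, h⟩ := h
  refine ⟨a * y, b * y, w, ?_⟩
  rw [← h, ← hab]; push_cast; ring

lemma rep_odd (p r : ℕ) (hp : p.Prime) (hpo : Odd p) (hr : r.Prime) (hr4 : r % 4 = 3)
    (hne : p ≠ r) (hpr : jacobiSym (-p) r = 1) : ∀ (x : ℕ), 0 < x → Nat.Coprime p x →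
    (∃ β : ℤ, (p : ℤ) ∣ β ^ 2 - x) → ∃ u v w : ℚ, u ^ 2 + r * v ^ 2 + p * w ^ 2 = x := by
  intro x
  induction x using Nat.strong_induction_on with
  | _ x ih =>
  intro hx hpx hsq
  have hro : Odd r := Nat.odd_iff.2 (by omega)
  have cpr : Nat.Coprime p r := (Nat.coprime_primes hp hr).2 hne
  have hcases : Odd x ∨ (∃ m, x = 2 * m ∧ Odd m) ∨ ∃ m, x = 4 * m := by
    have h : x % 2 = 1 ∨ x % 4 = 2 ∨ x % 4 = 0 := by omega
    rcases h with h | h | h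
    · exact Or.inl (Nat.odd_iff.2 h)
    · exact Or.inr (Or.inl ⟨x / 2, by omega, Nat.odd_iff.2 (by omega)⟩)
    · exact Or.inr (Or.inr ⟨x / 4, by omega⟩)
  rcases hcases with hxo | ⟨m, rfl, hm⟩ | ⟨m, rfl⟩
  · have hJx : jacobiSym x p = 1 := by
      refine jac_of_sq hp hsq ?_
      intro h
      have h' : p ∣ x := by exact_mod_cast h
      have := hpx.eq_one_of_dvd h'
      exact hp.ne_one this
    have hcc : ∃ τ, (τ = 1 ∧ jacobiSym (-p) x = 1) ∨
      (τ = 3 ∧ p % 4 = 1 ∧ x % 4 = 3 ∧ jacobiSym (-p) x = -1) := by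
      have : p % 4 = 1 ∨ p % 4 = 3 := by have := Nat.odd_iff.1 hpo; omega
      rcases this with h | h
      · have e : jacobiSym (-p) x = jacobiSym (-1) x * jacobiSym p x := by
          rw [← jacobiSym.mul_left]; congr 1; ring
        rw [jacobiSym.quadratic_reciprocity_one_mod_four h hxo, hJx, mul_one,
          jacobiSym.at_neg_one hxo] at e
        have : x % 4 = 1 ∨ x % 4 = 3 := by have := Nat.odd_iff.1 hxo; omega
        rcases this with h' | h'
        · exact ⟨1, Or.inl ⟨rfl, by rw [e, ZMod.χ₄_nat_one_mod_four h']⟩⟩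
        · exact ⟨3, Or.inr ⟨rfl, h, h', by rw [e, ZMod.χ₄_nat_three_mod_four h']⟩⟩
      · exact ⟨1, Or.inl ⟨rfl, by rw [jac_neg p x h hxo, hJx]⟩⟩
    obtain ⟨τ, hcc⟩ := hcc
    obtain ⟨t, hrt, ht, h4, h2, h⟩ := core1 p r x τ hpo hro hxo cpr hpx hsq hcc
    refine rep_of_t p r x t hr hr4 hpr ht ?_ hrt h2 h
    exact Nat.odd_iff.2 (by rcases hcc with ⟨rfl, _⟩ | ⟨rfl, _⟩ <;> omega)
  · obtain ⟨t, hrt, ht, h4, h2, h⟩ := core2 p r m hpo hro hm cpr hpx.coprime_mul_left_right hsq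
    exact rep_of_t p r (2 * m) t hr hr4 hpr ht (Nat.odd_iff.2 (by omega)) hrt h2 h
  · obtain ⟨u, v, w, h⟩ := ih m (by omega) (by omega) hpx.coprime_mul_left_right (by
      obtain ⟨β, hβ⟩ := hsq
      obtain ⟨β', hβ'⟩ : ∃ β' : ℤ, (p : ℤ) ∣ β - 2 * β' := by
        rcases Int.even_or_odd' β with ⟨k, hk | hk⟩
        · exact ⟨k, by simp [hk]⟩
        · obtain ⟨q, hq⟩ := hpo
          exact ⟨k - q, 1, by rw [hk, hq]; push_cast; ring⟩
      refine ⟨β', ?_⟩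
      have hcop : IsCoprime (p : ℤ) 4 := by
        have := Nat.isCoprime_iff_coprime.2 ((Nat.coprime_two_right.2 hpo).pow_right 2)
        exact_mod_cast this
      apply hcop.dvd_of_dvd_mul_left
      have := dvd_sub hβ (Dvd.dvd.mul_right hβ' (β + 2 * β'))
      convert this using 1
      push_cast; ring)
    refine ⟨2 * u, 2 * v, 2 * w, ?_⟩
    push_cast
    rw [← h]; ring

lemma aniso (p : ℕ) (hp : p.Prime) (r U V : ℤ) (hr : ¬ ∃ β : ℤ, (p : ℤ) ∣ β ^ 2 + r)
    (h : (p : ℤ) ∣ U ^ 2 + r * V ^ 2) : (p : ℤ) ∣ U ∧ (p : ℤ) ∣ V := by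
  have hpp : Prime (p : ℤ) := Nat.prime_iff_prime_int.1 hp
  have hV : (p : ℤ) ∣ V := by
    by_contra hV
    obtain ⟨a, b, hab⟩ : IsCoprime (p : ℤ) V := (Irreducible.coprime_iff_not_dvd hpp.irreducible).2 hV
    apply hr
    refine ⟨b * U, ?_⟩
    obtain ⟨k, hk⟩ := h
    refine ⟨b ^ 2 * k + r * a * (1 + b * V), ?_⟩
    linear_combination b ^ 2 * hk - r * (1 + b * V) * hab
  refine ⟨?_, hV⟩
  have : (p : ℤ) ∣ U ^ 2 := by
    rw [← dvd_add_left (Dvd.dvd.mul_left (dvd_pow hV two_ne_zero) r)]; exact h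
  exact hpp.dvd_of_dvd_pow this

lemma nonrep_odd (p : ℕ) (hp : p.Prime) (r g d : ℤ) (hr : ¬ ∃ β : ℤ, (p : ℤ) ∣ β ^ 2 + r)
    (hd : ¬ (p : ℤ) ∣ d) (hg : (p : ℤ) ∣ g + r * d ^ 2) :
    ∀ (n : ℕ) (U V W E : ℤ), E.natAbs = n → U ^ 2 + r * V ^ 2 + p * W ^ 2 = p * g * E ^ 2 →
      E = 0 := by
  have hpp : Prime (p : ℤ) := Nat.prime_iff_prime_int.1 hp
  have hp0 : (p : ℤ) ≠ 0 := hpp.ne_zero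
  intro n
  induction n using Nat.strong_induction_on with
  | _ n ih =>
  intro U V W E hE h
  by_contra hE0
  have h1 : (p : ℤ) ∣ U ^ 2 + r * V ^ 2 := ⟨g * E ^ 2 - W ^ 2, by linear_combination h⟩
  obtain ⟨⟨U', rfl⟩, ⟨V', rfl⟩⟩ := aniso p hp r U V hr h1
  have h' : p * (U' ^ 2 + r * V' ^ 2) + W ^ 2 = g * E ^ 2 := by
    apply mul_left_cancel₀ hp0
    linear_combination h
  have h2 : (p : ℤ) ∣ W ^ 2 + r * (d * E) ^ 2 := by
    obtain ⟨k, hk⟩ := hg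
    refine ⟨k * E ^ 2 - (U' ^ 2 + r * V' ^ 2), ?_⟩
    linear_combination h' + E ^ 2 * hk
  obtain ⟨⟨W', rfl⟩, hdE⟩ := aniso p hp r W (d * E) hr h2
  obtain ⟨E', rfl⟩ := (hpp.dvd_or_dvd hdE).resolve_left hd
  have hE' : E' ≠ 0 := by rintro rfl; simp at hE0
  apply hE'
  refine ih E'.natAbs ?_ U' V' W' E' rfl ?_
  · rw [← hE, Int.natAbs_mul, Int.natAbs_natCast]
    have := hp.two_le
    have := Int.natAbs_pos.2 hE'
    nlinarith
  · apply mul_left_cancel₀ hp0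
    linear_combination h'

lemma exists_r (p : ℕ) (hp : p.Prime) (hpo : Odd p) : ∃ r : ℕ, r.Prime ∧ r % 4 = 3 ∧ p ≠ r ∧
    jacobiSym (-p) r = 1 ∧ ¬ ∃ β : ℤ, (p : ℤ) ∣ β ^ 2 + r := by
  have : Fact p.Prime := ⟨hp⟩
  obtain ⟨a, ha⟩ := FiniteField.exists_nonsquare (F := ZMod p) (by
    rw [ZMod.ringChar_zmod_n]
    rintro rfl
    exact absurd hpo (by decide))
  have ha0 : a ≠ 0 := by rintro rfl; exact ha (IsSquare.zero)
  have cp4 : Nat.Coprime p 4 := (Nat.coprime_two_right.2 hpo).pow_right 2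
  obtain ⟨k, h1, h2⟩ := Nat.chineseRemainder cp4 (-a).val 3
  have hk : (k : ZMod p) = -a := by
    rw [(ZMod.natCast_eq_natCast_iff _ _ _).2 h1, ZMod.natCast_zmod_val]
  have hc : Nat.Coprime k (p * 4) := by
    refine Nat.Coprime.mul_right ?_ ?_
    · rw [Nat.coprime_comm, Nat.Prime.coprime_iff_not_dvd hp, ← ZMod.natCast_eq_zero_iff, hk]
      simpa using ha0
    · rw [Nat.Coprime, h2.gcd_eq]; rfl
  obtain ⟨r, hrp, hr, hrk⟩ := Nat.forall_exists_prime_gt_and_modEq p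
    (by have := hp.pos; positivity) hc
  have hr4 : r % 4 = 3 := (hrk.of_mul_left p).trans h2
  have hro : Odd r := Nat.odd_iff.2 (by omega)
  have hra : (r : ZMod p) = -a := by
    rw [← hk]; exact (ZMod.natCast_eq_natCast_iff _ _ _).2 (hrk.of_mul_right 4)
  refine ⟨r, hr, hr4, by omega, ?_, ?_⟩
  · have e : jacobiSym (-p) r = jacobiSym (-1) r * jacobiSym p r := by
      rw [← jacobiSym.mul_left]; congr 1; ring
    rw [e, jacobiSym.at_neg_one hro, ZMod.χ₄_nat_three_mod_four hr4, ← jac_neg r p hr4 hpo,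
      ← jacobiSym.legendreSym.to_jacobiSym]
    have : legendreSym p (-r) = -1 := by
      rw [legendreSym.eq_neg_one_iff]
      push_cast
      rw [hra, neg_neg]; exact ha
    rw [this]; rfl
  · rintro ⟨β, hβ⟩
    apply ha
    rw [← ZMod.intCast_zmod_eq_zero_iff_dvd] at hβ
    push_cast at hβ
    rw [hra] at hβ
    exact ⟨β, by linear_combination -hβ⟩

/-- Clearing denominators. -/
lemma common_den (u v w : ℚ) : ∃ (U V W E : ℤ), E ≠ 0 ∧ u * E = U ∧ v * E = V ∧ w * E = W := by
  refine ⟨u.num * v.den * w.den, v.num * u.den * w.den, w.num * u.den * v.den,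
    u.den * v.den * w.den, ?_, ?_, ?_, ?_⟩
  · have := u.den_nz; have := v.den_nz; have := w.den_nz; positivity
  · have := Rat.mul_den_eq_num u
    push_cast; linear_combination (v.den * w.den : ℚ) * this
  · have := Rat.mul_den_eq_num v
    push_cast; linear_combination (u.den * w.den : ℚ) * this
  · have := Rat.mul_den_eq_num w
    push_cast; linear_combination (u.den * v.den : ℚ) * this

/-- The set used to define the integers. -/
def SS (r p c d k : ℚ) : Prop := ¬ ∃ u v w : ℚ, c + d * k ^ 2 = u ^ 2 + r * v ^ 2 + p * w ^ 2

lemma SS_odd (p : ℕ) (hp : p.Prime) (hpo : Odd p) :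
    ∃ r P c d : ℚ, ∀ k : ℚ, SS r P c d k ↔ ¬ p ∣ k.den := by
  obtain ⟨r, hr, hr4, hne, hpr, hns⟩ := exists_r p hp hpo
  refine ⟨r, p, p * r * (p - 1), p ^ 2, fun k => ?_⟩
  have hpp : Prime (p : ℤ) := Nat.prime_iff_prime_int.1 hp
  have hk := Rat.mul_den_eq_num k
  have hd0 : (k.den : ℚ) ≠ 0 := by exact_mod_cast k.den_nz
  constructor
  · intro h hpd
    apply h
    obtain ⟨e, he⟩ := hpd
    have he0 : (e : ℚ) ≠ 0 := by
      rintro h; rw [he] at hd0; push_cast at hd0; simp [h] at hd0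
    have hpn : ¬ p ∣ k.num.natAbs := by
      intro h
      have := Nat.Coprime.eq_one_of_dvd (k.reduced.coprime_dvd_left h) ⟨e, he⟩
      exact hp.ne_one this
    obtain ⟨u, v, w, hu⟩ := rep_odd p r hp hpo hr hr4 hne hpr
      (k.num.natAbs ^ 2 + p * (r * (p - 1) * e ^ 2))
      (by
        have : k.num.natAbs ≠ 0 := by intro h; rw [h] at hpn; exact hpn (dvd_zero _)
        positivity)
      (by
        rw [hp.coprime_iff_not_dvd, ← Nat.dvd_add_iff_left (Dvd.intro _ rfl)]
        exact fun h => hpn (hp.dvd_of_dvd_pow h))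
      ⟨k.num, -(r * ((p - 1 : ℕ) : ℤ) * e ^ 2), by push_cast; rw [sq_abs]; ring⟩
    refine ⟨u / e, v / e, w / e, ?_⟩
    have h1 : ((k.num.natAbs : ℚ)) ^ 2 = (k * (p * e)) ^ 2 := by
      have : (k.den : ℚ) = p * e := by rw [he]; push_cast; rfl
      rw [← this, hk, Nat.cast_natAbs, Int.cast_abs, sq_abs]
    push_cast [Nat.cast_sub hp.one_le] at hu
    rw [h1] at hu
    field_simp
    linear_combination -hu
  · rintro hpd ⟨u, v, w, h⟩
    obtain ⟨U, V, W, E, hE, hU, hV, hW⟩ := common_den u v w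
    have hpd' : ¬ (p : ℤ) ∣ k.den := by exact_mod_cast hpd
    have key := nonrep_odd p hp r (r * (p - 1) * k.den ^ 2 + p * k.num ^ 2) k.den hns hpd'
      ⟨r * k.den ^ 2 + k.num ^ 2, by ring⟩ _ (U * k.den) (V * k.den) (W * k.den) E rfl (by
        have : ((U : ℚ) * k.den) ^ 2 + r * (V * k.den) ^ 2 + p * (W * k.den) ^ 2 =
          p * (r * (p - 1) * k.den ^ 2 + p * k.num ^ 2) * E ^ 2 := by
          rw [← hU, ← hV, ← hW, ← hk]
          linear_combination (-(E : ℚ) ^ 2 * k.den ^ 2) * h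
        exact_mod_cast this)
    exact hE key

lemma nonrep_two (g : ℤ) (hg : g % 8 = 7) :
    ∀ (n : ℕ) (U V W E : ℤ), E.natAbs = n → U ^ 2 + V ^ 2 + W ^ 2 = g * E ^ 2 → E = 0 := by
  intro n
  induction n using Nat.strong_induction_on with
  | _ n ih =>
  intro U V W E hE h
  by_contra hE0
  have hg' : (g : ZMod 8) = 7 := by
    have := (ZMod.intCast_eq_intCast_iff g 7 8).2 hg
    simpa using this
  have h8 : (U : ZMod 8) ^ 2 + (V : ZMod 8) ^ 2 + (W : ZMod 8) ^ 2 = 7 * (E : ZMod 8) ^ 2 := by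
    rw [← hg']; exact_mod_cast congrArg (Int.cast : ℤ → ZMod 8) h
  have key : ∀ a b c e : ZMod 8, a ^ 2 + b ^ 2 + c ^ 2 = 7 * e ^ 2 →
      4 * a = 0 ∧ 4 * b = 0 ∧ 4 * c = 0 ∧ 4 * e = 0 := by decide
  have ev : ∀ z : ℤ, 4 * (z : ZMod 8) = 0 → ∃ y, z = 2 * y := by
    intro z hz
    have : ((4 * z : ℤ) : ZMod 8) = 0 := by push_cast; exact hz
    rw [ZMod.intCast_zmod_eq_zero_iff_dvd] at this
    exact ⟨z / 2, by push_cast at this; omega⟩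
  obtain ⟨k1, k2, k3, k4⟩ := key _ _ _ _ h8
  obtain ⟨U, rfl⟩ := ev _ k1
  obtain ⟨V, rfl⟩ := ev _ k2
  obtain ⟨W, rfl⟩ := ev _ k3
  obtain ⟨E', rfl⟩ := ev _ k4
  have : E' = 0 := ih E'.natAbs (by omega) U V W E' rfl (by linarith)
  exact hE0 (by rw [this]; rfl)

lemma rep_two_of_t (x t : ℕ) (ht : t.Prime) (h4 : t % 4 = 1)
    (h : ∃ y w : ℚ, t * y ^ 2 + (1 : ℕ) * w ^ 2 = x) :
    ∃ u v w : ℚ, u ^ 2 + v ^ 2 + w ^ 2 = x := by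
  have : Fact t.Prime := ⟨ht⟩
  obtain ⟨a, b, hab⟩ := Nat.Prime.sq_add_sq (p := t) (by omega)
  obtain ⟨y, w, h⟩ := h
  refine ⟨a * y, b * y, w, ?_⟩
  rw [← h, ← hab]; push_cast; ring

lemma rep_two (x : ℕ) (h : x % 4 = 1 ∨ x % 4 = 2) :
    ∃ u v w : ℚ, u ^ 2 + v ^ 2 + w ^ 2 = x := by
  rcases h with h | h
  · have hx : Odd x := Nat.odd_iff.2 (by omega)
    obtain ⟨t, -, ht, h4, -, h⟩ := core1 1 1 x 1 odd_one odd_one hx (by simp) (by simp)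
      ⟨0, by simp⟩ (Or.inl ⟨rfl, by
        rw [Nat.cast_one, jacobiSym.at_neg_one hx, ZMod.χ₄_nat_one_mod_four h]⟩)
    exact rep_two_of_t x t ht h4 h
  · obtain ⟨m, rfl⟩ : ∃ m, x = 2 * m := ⟨x / 2, by omega⟩
    have hm : Odd m := Nat.odd_iff.2 (by omega)
    obtain ⟨t, -, ht, h4, -, h⟩ := core2 1 1 m odd_one odd_one hm (by simp) (by simp)
      ⟨0, by simp⟩
    exact rep_two_of_t _ t ht h4 h

lemma SS_two : ∀ k : ℚ, SS 1 1 7 8 k ↔ ¬ 2 ∣ k.den := by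
  intro k
  have hk := Rat.mul_den_eq_num k
  have hd0 : (k.den : ℚ) ≠ 0 := by exact_mod_cast k.den_nz
  have sq8 : ∀ n : ℕ, n % 2 = 1 → n ^ 2 % 8 = 1 := by
    intro n hn
    have : n % 8 = 1 ∨ n % 8 = 3 ∨ n % 8 = 5 ∨ n % 8 = 7 := by omega
    rcases this with h | h | h | h <;> simp [Nat.pow_mod, h]
  constructor
  · intro h hpd
    apply h
    obtain ⟨e, he⟩ := hpd
    have he0 : (e : ℚ) ≠ 0 := by
      rintro h; rw [he] at hd0; push_cast at hd0; simp [h] at hd0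
    have hpn : ¬ 2 ∣ k.num.natAbs := by
      intro h
      have := Nat.Coprime.eq_one_of_dvd (k.reduced.coprime_dvd_left h) ⟨e, he⟩
      omega
    obtain ⟨u, v, w, hu⟩ := rep_two (7 * e ^ 2 + 2 * k.num.natAbs ^ 2) (by
      have h1 := sq8 k.num.natAbs (by omega)
      rcases Nat.even_or_odd' e with ⟨f, rfl | hf⟩
      · right; rw [mul_pow]; omega
      · left
        have h2 := sq8 e (by omega)
        omega)
    refine ⟨u / e, v / e, w / e, ?_⟩
    have h1 : ((k.num.natAbs : ℚ)) ^ 2 = (k * (2 * e)) ^ 2 := by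
      have : (k.den : ℚ) = 2 * e := by rw [he]; push_cast; rfl
      rw [← this, hk, Nat.cast_natAbs, Int.cast_abs, sq_abs]
    push_cast at hu h1
    rw [h1] at hu
    field_simp
    linear_combination -hu
  · rintro hpd ⟨u, v, w, h⟩
    obtain ⟨U, V, W, E, hE, hU, hV, hW⟩ := common_den u v w
    have key := nonrep_two (7 * k.den ^ 2 + 8 * k.num ^ 2) (by
        have := sq8 k.den (by omega)
        have : ((k.den : ℤ)) ^ 2 % 8 = 1 := by exact_mod_cast this
        omega) _ (U * k.den) (V * k.den) (W * k.den) E rfl (by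
        have : ((U : ℚ) * k.den) ^ 2 + (V * k.den) ^ 2 + (W * k.den) ^ 2 =
          (7 * k.den ^ 2 + 8 * k.num ^ 2) * E ^ 2 := by
          rw [← hU, ← hV, ← hW, ← hk]
          linear_combination (-(E : ℚ) ^ 2 * k.den ^ 2) * h
        exact_mod_cast this)
    exact hE key

lemma SS_prime (p : ℕ) (hp : p.Prime) :
    ∃ r P c d : ℚ, ∀ k : ℚ, SS r P c d k ↔ ¬ p ∣ k.den := by
  rcases hp.eq_two_or_odd' with rfl | h
  · exact ⟨1, 1, 7, 8, SS_two⟩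
  · exact SS_odd p hp h

lemma rob_iff (q : ℚ) : ((∃ a b c d : ℚ, q = a ^ 2 + b ^ 2 + c ^ 2 + d ^ 2) ∧
    ∀ r P c d : ℚ, SS r P c d 0 → (∀ m, SS r P c d m → SS r P c d (m + 1)) → SS r P c d q) ↔
    ∃ n : ℕ, (n : ℚ) = q := by
  constructor
  · rintro ⟨⟨a, b, c, d, hq⟩, h⟩
    have hq0 : 0 ≤ q := by rw [hq]; positivity
    have hden : q.den = 1 := by
      by_contra hne
      obtain ⟨p, hp, hpd⟩ := Nat.exists_prime_and_dvd hne
      obtain ⟨r, P, c, d, hS⟩ := SS_prime p hp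
      refine (hS q).1 (h r P c d ?_ ?_) hpd
      · rw [hS]; simpa using hp.one_lt.ne'
      · intro m hm
        rw [hS] at hm ⊢
        have : (m + 1).den = m.den := by
          have := Rat.add_intCast_den m 1
          simpa using this
        rwa [this]
    refine ⟨q.num.toNat, ?_⟩
    have h1 : ((q.num.toNat : ℤ)) = q.num := Int.toNat_of_nonneg (Rat.num_nonneg.2 hq0)
    have h2 : ((q.num.toNat : ℤ) : ℚ) = q := by
      rw [h1]; exact Rat.coe_int_num_of_den_eq_one hden
    exact_mod_cast h2
  · rintro ⟨n, rfl⟩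
    refine ⟨?_, ?_⟩
    · obtain ⟨a, b, c, d, h⟩ := Nat.sum_four_squares n
      exact ⟨a, b, c, d, by rw [← h]; push_cast; rfl⟩
    · intro r P c d h0 hs
      induction n with
      | zero => simpa using h0
      | succ n ih => push_cast; exact hs _ ih
theorem robinson_nat_definable_in_rat :
    letI := FirstOrder.Ring.compatibleRingOfRing ℚ
    ∃ φ : FirstOrder.Language.ring.Formula (Fin 1),
      ∀ q : ℚ, φ.Realize (fun _ => q) ↔ ∃ n : ℕ, (n : ℚ) = q := by
  letI := FirstOrder.Ring.compatibleRingOfRing ℚ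

  let V : ∀ {n : ℕ}, Fin n → FirstOrder.Language.ring.Term (Fin 1 ⊕ Fin n) :=
    fun i => FirstOrder.Language.Term.var (Sum.inr i)
  let K : ∀ {n : ℕ}, FirstOrder.Language.ring.Term (Fin 1 ⊕ Fin n) :=
    FirstOrder.Language.Term.var (Sum.inl 0)
  let four : FirstOrder.Language.ring.BoundedFormula (Fin 1) 0 :=
    (FirstOrder.Language.Term.bdEqual (K (n := 4)) (V 0 * V 0 + V 1 * V 1 + V 2 * V 2 + V 3 * V 3)).ex.ex.ex.ex
  let s0 : FirstOrder.Language.ring.BoundedFormula (Fin 1) 4 :=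
    (FirstOrder.Language.Term.bdEqual (V (n := 7) 2 + V 3 * (0 * 0))
      (V 4 * V 4 + V 0 * (V 5 * V 5) + V 1 * (V 6 * V 6))).ex.ex.ex.not
  let sk : FirstOrder.Language.ring.BoundedFormula (Fin 1) 4 :=
    (FirstOrder.Language.Term.bdEqual (V (n := 7) 2 + V 3 * (K * K))
      (V 4 * V 4 + V 0 * (V 5 * V 5) + V 1 * (V 6 * V 6))).ex.ex.ex.not
  let sm : FirstOrder.Language.ring.BoundedFormula (Fin 1) 5 :=
    (FirstOrder.Language.Term.bdEqual (V (n := 8) 2 + V 3 * (V 4 * V 4))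
      (V 5 * V 5 + V 0 * (V 6 * V 6) + V 1 * (V 7 * V 7))).ex.ex.ex.not
  let sm1 : FirstOrder.Language.ring.BoundedFormula (Fin 1) 5 :=
    (FirstOrder.Language.Term.bdEqual (V (n := 8) 2 + V 3 * ((V 4 + 1) * (V 4 + 1)))
      (V 5 * V 5 + V 0 * (V 6 * V 6) + V 1 * (V 7 * V 7))).ex.ex.ex.not
  refine ⟨four ⊓ (s0.imp ((sm.imp sm1).all.imp sk)).all.all.all.all, fun q => ?_⟩
  rw [← rob_iff]
  simp only [four, s0, sk, sm, sm1, V, K, FirstOrder.Language.Formula.Realize,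
    FirstOrder.Language.BoundedFormula.realize_inf, FirstOrder.Language.BoundedFormula.realize_all,
    FirstOrder.Language.BoundedFormula.realize_ex, FirstOrder.Language.BoundedFormula.realize_imp,
    FirstOrder.Language.BoundedFormula.realize_not,
    FirstOrder.Language.BoundedFormula.realize_bdEqual, FirstOrder.Ring.realize_add,
    FirstOrder.Ring.realize_mul, FirstOrder.Ring.realize_one, FirstOrder.Ring.realize_zero,
    FirstOrder.Language.Term.realize_var, Sum.elim_inl, Sum.elim_inr, SS, sq]
  rfl
end

section
/- Completeness of the rule of McIver, Morgan, Kaminski and Katoen: Let M be a finitely-branching MDP with absorbing terminal state ⊥ that is almost surely terminating from the initial state σ. Then there exist antitone functions p : (0,∞) → (0,1] and d : (0,∞) → (0,∞) (i.e., r₁ ≤ r₂ implies p(r₁) ≥ p(r₂) and d(r₁) ≥ d(r₂)) and a function V : S → ℝ such that V(⊥) = 0, V(s) > 0 for every s ∈ Reach(σ) with s ≠ ⊥, V is a supermartingale function on Reach(σ), and for every s ∈ Reach(σ) with s ≠ ⊥ and every action μ ∈ Act(s), μ({s' : V(s) − V(s') ≥ d(V(s))}) ≥ p(V(s)). -/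
open scoped ENNReal Classical

/-- A finitely-branching MDP on a state space `S`: each state has a nonempty finite
set of available actions, each a finitely-supported PMF on `S`. -/
structure MDP (S : Type) where
  act : S → Finset (PMF S)
  act_nonempty : ∀ s, (act s).Nonempty
  act_finSupp : ∀ s, ∀ μ ∈ act s, (μ : PMF S).support.Finite

/-- A scheduler maps every history `(s₀, …, sₙ)` (given as the list of earlier
states `s₀, …, sₙ₋₁` together with the current state `sₙ`) to an available action. -/
structure Scheduler {S : Type} (M : MDP S) where
  choose : List S → S → PMF S
  choose_mem : ∀ hist s, choose hist s ∈ M.act s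

namespace MDP

variable {S : Type}

/-- Reachability: `s'` is reachable from `σ` via a finite path each of whose steps
lies in the support of some available action. -/
inductive Reach (M : MDP S) (σ : S) : S → Prop
  | refl : Reach M σ σ
  | step {s s' : S} (μ : PMF S) : Reach M σ s → μ ∈ M.act s → s' ∈ μ.support → Reach M σ s'

/-- Probability that the run (currently at `s`, with past history `hist`) visits the
set `T` within the next `k` steps, under scheduler `𝔰`. -/
noncomputable def hitProbAux (M : MDP S) (𝔰 : Scheduler M) (T : Set S) :
    ℕ → List S → S → ℝ≥0∞
  | 0, _, s => if s ∈ T then 1 else 0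
  | k + 1, hist, s =>
      if s ∈ T then 1
      else ∑' s', (𝔰.choose hist s) s' * hitProbAux M 𝔰 T k (hist ++ [s]) s'

/-- Probability that the run started at `σ` visits `T` within the first `k` steps. -/
noncomputable def hitProbWithin (M : MDP S) (𝔰 : Scheduler M) (σ : S) (T : Set S)
    (k : ℕ) : ℝ≥0∞ :=
  hitProbAux M 𝔰 T k [] σ

/-- Probability that the run started at `σ` ever visits `T`, under scheduler `𝔰`. -/
noncomputable def hitProb (M : MDP S) (𝔰 : Scheduler M) (σ : S) (T : Set S) : ℝ≥0∞ :=
  ⨆ k, hitProbWithin M 𝔰 σ T k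

/-- The terminal state `term` is absorbing: the only action there is the Dirac PMF. -/
def Absorbing (M : MDP S) (term : S) : Prop :=
  M.act term = {PMF.pure term}

/-- Termination probability: infimum over schedulers of the probability of visiting
the terminal state. -/
noncomputable def PrTerm (M : MDP S) (term σ : S) : ℝ≥0∞ :=
  ⨅ 𝔰 : Scheduler M, hitProb M 𝔰 σ {term}

/-- Almost-sure termination from `σ`. -/
def AST (M : MDP S) (term σ : S) : Prop := PrTerm M term σ = 1

/-- Mass a PMF assigns to a set. -/
noncomputable def mass (μ : PMF S) (A : Set S) : ℝ≥0∞ := ∑' a : A, μ a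

/-- Expected value of a real-valued function under a (finitely supported) PMF. -/
noncomputable def expect (μ : PMF S) (V : S → ℝ) : ℝ := ∑' s, (μ s).toReal * V s

/-- `V` is a supermartingale function on the states reachable from `σ`. -/
def SupermartingaleOn (M : MDP S) (σ : S) (V : S → ℝ) : Prop :=
  ∀ s, M.Reach σ s → ∀ μ ∈ M.act s, expect μ V ≤ V s

/-- `(Ψ, p)` is a stochastic invariant for initial state `σ`: under every scheduler the
probability that the run ever leaves `Ψ` is at most `p`. -/
def StochasticInvariant (M : MDP S) (σ : S) (Ψ : Set S) (p : ℝ) : Prop :=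
  ⨆ 𝔰 : Scheduler M, hitProb M 𝔰 σ Ψᶜ ≤ ENNReal.ofReal p

end MDP


namespace MDPaux

open MDP Filter

variable {S : Type}

noncomputable def E (μ : PMF S) (f : S → ℝ≥0∞) : ℝ≥0∞ := ∑' s, μ s * f s

lemma E_mono (μ : PMF S) {f g : S → ℝ≥0∞} (h : ∀ s, μ s ≠ 0 → f s ≤ g s) : E μ f ≤ E μ g := by
  refine ENNReal.tsum_le_tsum fun s => ?_
  by_cases h0 : μ s = 0
  · simp [h0]
  · gcongr
    exact h s h0

lemma E_const (μ : PMF S) (c : ℝ≥0∞) : E μ (fun _ => c) = c := by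
  simp [E, ENNReal.tsum_mul_right, μ.tsum_coe]

lemma E_le_one (μ : PMF S) {f : S → ℝ≥0∞} (h : ∀ s, f s ≤ 1) : E μ f ≤ 1 :=
  (E_mono μ (fun s _ => h s)).trans (E_const μ 1).le

lemma E_add (μ : PMF S) (f g : S → ℝ≥0∞) : E μ (fun s => f s + g s) = E μ f + E μ g := by
  simp [E, mul_add, ENNReal.tsum_add]

lemma E_tsum (μ : PMF S) (f : ℕ → S → ℝ≥0∞) : E μ (fun s => ∑' k, f k s) = ∑' k, E μ (f k) := by
  simp only [E, ← ENNReal.tsum_mul_left]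
  exact ENNReal.tsum_comm

lemma E_mul (μ : PMF S) (c : ℝ≥0∞) (f : S → ℝ≥0∞) : E μ (fun s => c * f s) = c * E μ f := by
  simp only [E, ← ENNReal.tsum_mul_left]
  exact tsum_congr fun s => by ring

lemma E_pure (t : S) (f : S → ℝ≥0∞) : E (PMF.pure t) f = f t := by
  unfold E
  rw [tsum_eq_single t]
  · simp
  · intro b hb
    simp [PMF.pure_apply, hb]

noncomputable def B (M : MDP S) (f : S → ℝ≥0∞) (s : S) : ℝ≥0∞ := ⨆ μ ∈ M.act s, E μ f

lemma le_B (M : MDP S) (f : S → ℝ≥0∞) {s : S} {μ : PMF S} (h : μ ∈ M.act s) : E μ f ≤ B M f s :=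
  le_iSup₂ (f := fun μ (_ : μ ∈ M.act s) => E μ f) μ h

lemma B_mono (M : MDP S) {f g : S → ℝ≥0∞} (s : S)
    (h : ∀ μ ∈ M.act s, ∀ s', μ s' ≠ 0 → f s' ≤ g s') : B M f s ≤ B M g s :=
  iSup₂_le fun μ hμ => (E_mono μ (h μ hμ)).trans (le_B M g hμ)

/-- Maximal probability of non-termination within `k` steps. -/
noncomputable def N (M : MDP S) (term : S) : ℕ → S → ℝ≥0∞
  | 0 => fun s => if s = term then 0 else 1
  | k + 1 => B M (N M term k)

lemma N_term (M : MDP S) (term : S) (h : M.Absorbing term) (k : ℕ) : N M term k term = 0 := by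
  induction k with
  | zero => simp [N]
  | succ k ih =>
    have h' : M.act term = {PMF.pure term} := h
    simp [N, B, h', E_pure, ih]

lemma N_one (M : MDP S) (term : S) (k : ℕ) (s : S) : N M term k s ≤ 1 := by
  induction k generalizing s with
  | zero => simp only [N]; split_ifs <;> simp
  | succ k ih => exact iSup₂_le fun μ _ => E_le_one μ ih

lemma N_succ (M : MDP S) (term : S) (h : M.Absorbing term) (k : ℕ) (s : S) :
    N M term (k + 1) s ≤ N M term k s := by
  induction k generalizing s with
  | zero =>
    by_cases hs : s = term
    · subst hs; rw [N_term M s h]; simp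
    · refine (N_one M term 1 s).trans ?_
      simp [N, hs]
  | succ k ih => exact B_mono M s fun μ _ s' _ => ih s'

lemma N_anti (M : MDP S) (term : S) (h : M.Absorbing term) (s : S) :
    Antitone (fun k => N M term k s) :=
  antitone_nat_of_succ_le fun k => N_succ M term h k s

noncomputable def Ninf (M : MDP S) (term s : S) : ℝ≥0∞ := ⨅ k, N M term k s

lemma exists_E_N (M : MDP S) (term : S) (h : M.Absorbing term) (s : S) :
    ∃ μ ∈ M.act s, ∀ k, Ninf M term s ≤ E μ (N M term k) := by
  by_contra! hc
  choose! k hk using hc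
  let K := (M.act s).sup k
  have h1 : ∀ μ ∈ M.act s, E μ (N M term K) < Ninf M term s := fun μ hμ =>
    (E_mono μ fun s' _ => N_anti M term h s' (Finset.le_sup hμ)).trans_lt (hk μ hμ)
  have h2 : N M term (K + 1) s < Ninf M term s := by
    obtain ⟨μ, hμ, he⟩ := Finset.exists_max_image (M.act s) (fun μ => E μ (N M term K))
      (M.act_nonempty s)
    exact (iSup₂_le he : B M (N M term K) s ≤ _).trans_lt (h1 μ hμ)
  exact absurd (iInf_le (fun k => N M term k s) (K + 1)) (not_le.2 h2)

lemma E_Ninf (M : MDP S) (term : S) (h : M.Absorbing term) (μ : PMF S) (hf : μ.support.Finite)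
    (c : ℝ≥0∞) (hc : ∀ k, c ≤ E μ (N M term k)) : c ≤ E μ (Ninf M term) := by
  have key : ∀ f : S → ℝ≥0∞, E μ f = ∑ s ∈ hf.toFinset, μ s * f s := by
    intro f
    refine tsum_eq_sum fun s hs => ?_
    have : μ s = 0 := by simpa using hs
    simp [this]
  have ht : Tendsto (fun k => E μ (N M term k)) atTop (nhds (E μ (Ninf M term))) := by
    simp only [key]
    refine tendsto_finsetSum _ fun s _ => ?_
    exact ENNReal.Tendsto.const_mul (tendsto_atTop_iInf (N_anti M term h s))
      (Or.inr (μ.apply_ne_top s))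
  exact ge_of_tendsto' ht hc

lemma Ninf_init (M : MDP S) (term σ : S) (h : M.Absorbing term) (hA : M.AST term σ) :
    Ninf M term σ = 0 := by
  choose c hc1 hc2 using exists_E_N M term h
  let 𝔰 : Scheduler M := ⟨fun _ s => c s, fun _ s => hc1 s⟩
  have key : ∀ k hist s, hitProbAux M 𝔰 {term} k hist s + Ninf M term s ≤ 1 := by
    have hT : Ninf M term term = 0 :=
      le_antisymm ((iInf_le _ 0).trans (N_term M term h 0).le) bot_le
    intro k
    induction k with
    | zero =>
      intro hist s
      by_cases hs : s = term
      · subst hs; simp [hitProbAux, hT]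
      · simp only [hitProbAux, Set.mem_singleton_iff, hs, if_false, zero_add]
        exact (iInf_le _ 0).trans (N_one M term 0 s)
    | succ k ih =>
      intro hist s
      by_cases hs : s = term
      · subst hs; simp [hitProbAux, hT]
      · simp only [hitProbAux, Set.mem_singleton_iff, hs, if_false]
        have h1 := E_Ninf M term h (c s) (M.act_finSupp s _ (hc1 s)) _ (hc2 s)
        refine (add_le_add_right h1 _).trans ?_
        have h2 := E_add (c s) (fun s' => hitProbAux M 𝔰 {term} k (hist ++ [s]) s') (Ninf M term)
        refine le_trans (le_of_eq h2.symm) (E_le_one _ fun s' => ih _ s')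
  have h1 : (1 : ℝ≥0∞) ≤ hitProb M 𝔰 σ {term} := by
    have : PrTerm M term σ = 1 := hA
    rw [← this]
    exact iInf_le _ 𝔰
  have h2 : hitProb M 𝔰 σ {term} ≤ 1 - Ninf M term σ := by
    refine iSup_le fun k => ?_
    have hN : Ninf M term σ ≠ ⊤ := ne_top_of_le_ne_top ENNReal.one_ne_top
      ((iInf_le _ 0).trans (N_one M term 0 σ))
    exact ENNReal.le_sub_of_add_le_right hN (key k [] σ)
  by_contra h0
  exact absurd (h1.trans h2) (not_le.2 (ENNReal.sub_lt_self ENNReal.one_ne_top one_ne_zero h0))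

lemma Ninf_reach (M : MDP S) (term σ : S) (h : M.Absorbing term) (hA : M.AST term σ) (s : S)
    (hs : M.Reach σ s) : Ninf M term s = 0 := by
  induction hs with
  | refl => exact Ninf_init M term σ h hA
  | @step s s' μ hr hμ hs' ih =>
    have h1 : μ s' * Ninf M term s' ≤ Ninf M term s := by
      refine le_iInf fun k => ?_
      refine le_trans ?_ (N_succ M term h k s)
      refine le_trans ?_ (le_B M (N M term k) hμ)
      refine le_trans ?_ (ENNReal.le_tsum s')
      gcongr
      exact iInf_le _ k
    rw [ih] at h1
    have h2 := mul_eq_zero.1 (le_antisymm h1 bot_le)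
    exact h2.resolve_left ((PMF.mem_support_iff _ _).1 hs')

def Good (M : MDP S) (A : Set S) (f : S → ℝ≥0∞) : Prop :=
  (∀ s ∈ A, 1 ≤ f s) ∧ ∀ s, ∀ μ ∈ M.act s, E μ f ≤ f s

noncomputable def U (M : MDP S) (A : Set S) (s : S) : ℝ≥0∞ := ⨅ f : {f // Good M A f}, f.1 s

lemma U_le (M : MDP S) {A : Set S} {f : S → ℝ≥0∞} (hf : Good M A f) (s : S) : U M A s ≤ f s :=
  iInf_le (fun f : {f // Good M A f} => f.1 s) ⟨f, hf⟩

lemma U_good (M : MDP S) (A : Set S) : Good M A (U M A) :=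
  ⟨fun s hs => le_iInf fun f => f.2.1 s hs, fun s μ hμ => le_iInf fun f =>
    (E_mono μ fun s' _ => U_le M f.2 s').trans (f.2.2 s μ hμ)⟩

lemma U_one (M : MDP S) (A : Set S) (s : S) : U M A s ≤ 1 :=
  U_le M (f := fun _ => 1) ⟨fun _ _ => le_rfl, fun _ μ _ => (E_const μ 1).le⟩ s

lemma U_N0 (M : MDP S) (term : S) (h : M.Absorbing term) (A : Set S) (hA : term ∉ A) (s : S) :
    U M A s ≤ N M term 0 s := by
  refine U_le M ⟨fun s hs => ?_, fun s μ hμ => ?_⟩ s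
  · have : s ≠ term := fun hh => hA (hh ▸ hs)
    simp [N, this]
  · exact (le_B M (N M term 0) hμ).trans (N_succ M term h 0 s)

lemma U_B (M : MDP S) (A : Set S) (s : S) (hs : s ∉ A) : U M A s ≤ B M (U M A) s := by
  have hg : Good M A (fun t => if t ∈ A then 1 else B M (U M A) t) := by
    have hle : ∀ t, (if t ∈ A then 1 else B M (U M A) t) ≤ U M A t := by
      intro t
      split_ifs with ht
      · exact (U_good M A).1 t ht
      · exact iSup₂_le fun μ hμ => (U_good M A).2 t μ hμ
    refine ⟨fun t ht => by simp [ht], fun t μ hμ => ?_⟩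
    by_cases ht : t ∈ A
    · simp only [ht, if_true]
      exact E_le_one μ fun t' => (hle t').trans (U_one M A t')
    · simp only [ht, if_false]
      exact (E_mono μ fun t' _ => hle t').trans (le_B M _ hμ)
  have := U_le M hg s
  simpa [hs] using this

def A (term : S) (e : S → ℕ) (n : ℕ) : Set S := {s | s ≠ term ∧ n ≤ e s}

lemma U_ev (M : MDP S) (term : S) (h : M.Absorbing term) (e : S → ℕ) (j : ℕ) (s : S) :
    ∀ᶠ n in atTop, U M (A term e n) s ≤ N M term j s := by
  induction j generalizing s with
  | zero => exact Eventually.of_forall fun n => U_N0 M term h _ (fun hh => hh.1 rfl) s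
  | succ j ih =>
    have h1 : ∀ᶠ n in atTop, ∀ μ ∈ M.act s, ∀ s' ∈ μ.support,
        U M (A term e n) s' ≤ N M term j s' := by
      rw [Filter.eventually_all_finset]
      intro μ hμ
      rw [Filter.eventually_all_finite (M.act_finSupp s μ hμ)]
      exact fun s' _ => ih s'
    filter_upwards [h1, eventually_gt_atTop (e s)] with n hn hn2
    refine (U_B M _ s fun hh => absurd hh.2 (not_le.2 hn2)).trans ?_
    exact B_mono M s fun μ hμ s' hs' => hn μ hμ s' ((PMF.mem_support_iff _ _).2 hs')

lemma U_ev' (M : MDP S) (term σ : S) (h : M.Absorbing term) (hA : M.AST term σ) (e : S → ℕ)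
    (s : S) (hs : M.Reach σ s) (ε : ℝ≥0∞) (hε : 0 < ε) :
    ∀ᶠ n in atTop, U M (A term e n) s ≤ ε := by
  have h0 : Ninf M term s < ε := by rwa [Ninf_reach M term σ h hA s hs]
  obtain ⟨j, hj⟩ := iInf_lt_iff.1 h0
  filter_upwards [U_ev M term h e j s] with n hn
  exact hn.trans hj.le

/-- The `ℝ≥0∞`-valued supermartingale. -/
lemma exists_V (M : MDP S) [Countable S] (term σ : S) (h : M.Absorbing term)
    (hA : M.AST term σ) : ∃ V : S → ℝ≥0∞, V term = 0 ∧
      (∀ s, M.Reach σ s → V s ≠ ⊤) ∧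
      (∀ s, ∀ μ ∈ M.act s, E μ V ≤ V s) ∧
      (∀ s, M.Reach σ s → s ≠ term → 0 < V s) ∧
      (∀ s, M.Reach σ s → s ≠ term → ∀ μ ∈ M.act s, E μ V < V s) ∧
      (∀ m : ℕ, {s | s ≠ term ∧ V s < m}.Finite) := by
  obtain ⟨e, he⟩ := exists_injective_nat S
  have hn : ∀ j : ℕ, ∃ n, ∀ s, e s ≤ j → M.Reach σ s →
      U M (A term e n) s ≤ (2⁻¹ : ℝ≥0∞) ^ j := by
    intro j
    have hfin : {s | e s ≤ j ∧ M.Reach σ s}.Finite :=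
      ((Set.finite_Iic j).preimage he.injOn).subset fun s hs => hs.1
    have : ∀ᶠ n in atTop, ∀ s ∈ {s | e s ≤ j ∧ M.Reach σ s},
        U M (A term e n) s ≤ (2⁻¹ : ℝ≥0∞) ^ j := by
      rw [Filter.eventually_all_finite hfin]
      exact fun s hs => U_ev' M term σ h hA e s hs.2 _ (ENNReal.pow_pos (by simp) j)
    obtain ⟨n, hn⟩ := this.exists
    exact ⟨n, fun s h1 h2 => hn s ⟨h1, h2⟩⟩
  choose n hn using hn
  let V1 : S → ℝ≥0∞ := fun s => ∑' j, U M (A term e (n j)) s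
  let W : S → ℝ≥0∞ := fun s => ∑' k, (2⁻¹ : ℝ≥0∞) ^ k * N M term k s
  have hgeo : (∑' k : ℕ, (2⁻¹ : ℝ≥0∞) ^ k) ≠ ⊤ := by
    rw [ENNReal.tsum_geometric]; simp
  have hWfin : ∀ s, W s ≠ ⊤ := fun s => ne_top_of_le_ne_top hgeo
    (ENNReal.tsum_le_tsum fun k => mul_le_of_le_one_right' (N_one M term k s))
  have hVfin : ∀ s, M.Reach σ s → V1 s ≠ ⊤ := by
    intro s hs
    have : V1 s ≤ ∑' j, ((if j < e s then 1 else 0) + (2⁻¹ : ℝ≥0∞) ^ j) := by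
      refine ENNReal.tsum_le_tsum fun j => ?_
      split_ifs with hj
      · exact (U_one M _ s).trans le_self_add
      · rw [zero_add]; exact hn j s (not_lt.1 hj) hs
    refine ne_top_of_le_ne_top ?_ this
    rw [ENNReal.tsum_add]
    refine ENNReal.add_ne_top.2 ⟨?_, hgeo⟩
    rw [tsum_eq_sum (s := Finset.range (e s)) (fun j hj => by
      simpa using hj)]
    refine (ENNReal.sum_lt_top.2 fun j _ => ?_).ne
    split_ifs <;> simp
  have hV1 : ∀ s, ∀ μ ∈ M.act s, E μ V1 ≤ V1 s := by
    intro s μ hμ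
    rw [E_tsum]
    exact ENNReal.tsum_le_tsum fun j => (U_good M _).2 s μ hμ
  have hEW : ∀ s, ∀ μ ∈ M.act s, E μ W ≤ ∑' k, (2⁻¹ : ℝ≥0∞) ^ k * N M term (k + 1) s := by
    intro s μ hμ
    rw [E_tsum]
    refine ENNReal.tsum_le_tsum fun k => ?_
    rw [E_mul]
    gcongr
    exact le_B M _ hμ
  have hWle : ∀ s k, (2⁻¹ : ℝ≥0∞) ^ k * N M term (k + 1) s ≤ (2⁻¹ : ℝ≥0∞) ^ k * N M term k s := by
    intro s k
    gcongr
    exact N_succ M term h k s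
  have hWlt : ∀ s, M.Reach σ s → s ≠ term → ∀ μ ∈ M.act s, E μ W < W s := by
    intro s hs hst μ hμ
    refine (hEW s μ hμ).trans_lt ?_
    have hex : ∃ k, N M term (k + 1) s < N M term k s := by
      by_contra! hc
      have h1 : ∀ k, 1 ≤ N M term k s := by
        intro k
        induction k with
        | zero => simp [N, hst]
        | succ k ih => exact ih.trans (hc k)
      have h2 : (1 : ℝ≥0∞) ≤ Ninf M term s := le_iInf h1
      rw [Ninf_reach M term σ h hA s hs] at h2
      simp at h2
    obtain ⟨k, hk⟩ := hex
    refine ENNReal.tsum_lt_tsum (i := k) ?_ (hWle s) ?_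
    · exact ne_top_of_le_ne_top (hWfin s) (ENNReal.tsum_le_tsum (hWle s))
    · exact (ENNReal.mul_lt_mul_iff_right (pow_ne_zero _ (by simp))
        (ENNReal.pow_ne_top (by simp))).2 hk
  have hlt : ∀ s, M.Reach σ s → s ≠ term → ∀ μ ∈ M.act s,
      E μ (fun s => V1 s + W s) < V1 s + W s := by
    intro s hs hst μ hμ
    rw [E_add]
    exact ENNReal.add_lt_add_of_le_of_lt (ne_top_of_le_ne_top (hVfin s hs) (hV1 s μ hμ))
      (hV1 s μ hμ) (hWlt s hs hst μ hμ)
  refine ⟨fun s => V1 s + W s, ?_, ?_, ?_, ?_, hlt, ?_⟩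
  · have h1 : V1 term = 0 := by
      refine ENNReal.tsum_eq_zero.2 fun j => le_antisymm ?_ bot_le
      exact (U_N0 M term h _ (fun hh => hh.1 rfl) term).trans (N_term M term h 0).le
    have h2 : W term = 0 := ENNReal.tsum_eq_zero.2 fun k => by simp [N_term M term h k]
    simp [h1, h2]
  · exact fun s hs => ENNReal.add_ne_top.2 ⟨hVfin s hs, hWfin s⟩
  · intro s μ hμ
    rw [E_add]
    exact add_le_add (hV1 s μ hμ) ((hEW s μ hμ).trans (ENNReal.tsum_le_tsum (hWle s)))
  · intro s hs hst
    obtain ⟨μ, hμ⟩ := M.act_nonempty s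
    exact bot_le.trans_lt (hlt s hs hst μ hμ)
  · intro m
    refine ((Set.finite_Iio ((Finset.range m).sup n)).preimage he.injOn).subset ?_
    rintro s ⟨hst, hs⟩
    by_contra hc
    have hc' : (Finset.range m).sup n ≤ e s := by simpa using hc
    have h1 : (m : ℝ≥0∞) ≤ V1 s := by
      calc (m : ℝ≥0∞) = ∑ j ∈ Finset.range m, 1 := by simp
        _ ≤ ∑ j ∈ Finset.range m, U M (A term e (n j)) s :=
            Finset.sum_le_sum fun j hj => (U_good M _).1 s ⟨hst, (Finset.le_sup hj).trans hc'⟩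
        _ ≤ V1 s := ENNReal.sum_le_tsum _
    exact absurd (hs.trans_le h1) (not_lt.2 le_self_add)

lemma exists_antitone (V : S → ℝ) (Q : Set S) (hf : ∀ r, {s | s ∈ Q ∧ V s ≤ r}.Finite)
    (q : S → ℝ) (hq : ∀ s ∈ Q, 0 < q s) :
    ∃ p : ℝ → ℝ, (∀ r, 0 < p r ∧ p r ≤ 1) ∧ (∀ r₁ r₂, r₁ ≤ r₂ → p r₂ ≤ p r₁) ∧
      ∀ s ∈ Q, p (V s) ≤ q s := by
  let T : ℝ → Set ℝ := fun r => insert 1 (q '' {s | s ∈ Q ∧ V s ≤ r})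
  have hT : ∀ r, (T r).Finite := fun r => ((hf r).image q).insert 1
  have hne : ∀ r, (T r).Nonempty := fun r => ⟨1, Set.mem_insert _ _⟩
  refine ⟨fun r => sInf (T r), fun r => ⟨?_, csInf_le (hT r).bddBelow (Set.mem_insert _ _)⟩, ?_, ?_⟩
  · rcases (hne r).csInf_mem (hT r) with h1 | ⟨s, hs, h1⟩
    · simp only [h1]; norm_num
    · simp only [← h1]; exact hq s hs.1
  · intro r₁ r₂ hr
    refine csInf_le_csInf (hT r₂).bddBelow (hne r₁) (Set.insert_subset_insert (Set.image_mono ?_))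
    exact fun s hs => ⟨hs.1, hs.2.trans hr⟩
  · intro s hs
    exact csInf_le (hT _).bddBelow (Set.mem_insert_of_mem _ ⟨s, ⟨hs, le_rfl⟩, rfl⟩)

lemma finset_pos {α : Type} (F : Finset α) (f : α → ℝ) (hf : ∀ a ∈ F, 0 < f a) :
    ∃ c > 0, ∀ a ∈ F, c ≤ f a := by
  rcases F.eq_empty_or_nonempty with h | h
  · exact ⟨1, one_pos, by simp [h]⟩
  · obtain ⟨a, ha, h1⟩ := F.exists_min_image f h
    exact ⟨f a, hf a ha, h1⟩

end MDPaux

open MDPaux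

/-- **Completeness of the rule of McIver, Morgan, Kaminski and Katoen.** If `M` is almost
surely terminating from `σ`, then there exist antitone progress functions
`p : (0,∞) → (0,1]` and `d : (0,∞) → (0,∞)` and a supermartingale `V` (zero at the
terminal state, positive at all other reachable states) such that at every reachable
non-terminal state `s` and action `μ`, the value of `V` drops by at least `d (V s)` with
probability at least `p (V s)`. -/
theorem mmkk_rule_complete {S : Type} [Countable S] (M : MDP S) (term σ : S)
    (hterm : M.Absorbing term) (hAST : M.AST term σ) :
    ∃ (p d : ℝ → ℝ) (V : S → ℝ),
      (∀ r : ℝ, 0 < r → 0 < p r ∧ p r ≤ 1) ∧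
      (∀ r : ℝ, 0 < r → 0 < d r) ∧
      (∀ r₁ r₂ : ℝ, 0 < r₁ → r₁ ≤ r₂ → p r₂ ≤ p r₁) ∧
      (∀ r₁ r₂ : ℝ, 0 < r₁ → r₁ ≤ r₂ → d r₂ ≤ d r₁) ∧
      V term = 0 ∧
      (∀ s, M.Reach σ s → s ≠ term → 0 < V s) ∧
      M.SupermartingaleOn σ V ∧
      (∀ s, M.Reach σ s → s ≠ term → ∀ μ ∈ M.act s,
        ENNReal.ofReal (p (V s)) ≤ MDP.mass μ {s' | d (V s) ≤ V s - V s'}) := by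
  obtain ⟨V, hV0, hVfin, hVsup, hVpos, hVlt, hVsub⟩ := exists_V M term σ hterm hAST
  let v : S → ℝ := fun s => (V s).toReal
  let Q : Set S := {s | M.Reach σ s ∧ s ≠ term}
  have hdrop : ∀ s ∈ Q, ∀ μ ∈ M.act s, ∃ s', μ s' ≠ 0 ∧ v s' < v s := by
    rintro s ⟨hs, hst⟩ μ hμ
    by_contra! hc
    refine absurd (hVlt s hs hst μ hμ) (not_lt.2 ?_)
    rw [← E_const μ (V s)]
    refine E_mono μ fun s' hs' => ?_
    have hr : M.Reach σ s' := hs.step μ hμ ((PMF.mem_support_iff _ _).2 hs')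
    exact (ENNReal.toReal_le_toReal (hVfin s hs) (hVfin s' hr)).1 (hc s' hs')
  have hqd : ∀ s, ∃ q δ : ℝ, s ∈ Q → 0 < q ∧ 0 < δ ∧ ∀ μ ∈ M.act s, ∃ s',
      ENNReal.ofReal q ≤ μ s' ∧ δ ≤ v s - v s' := by
    intro s
    by_cases hs : s ∈ Q
    · haveI : Nonempty S := ⟨s⟩
      choose! g hg1 hg2 using hdrop s hs
      obtain ⟨q, hq, hq'⟩ := finset_pos (M.act s) (fun μ => (μ (g μ)).toReal)
        (fun μ hμ => ENNReal.toReal_pos (hg1 μ hμ) (μ.apply_ne_top _))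
      obtain ⟨δ, hδ, hδ'⟩ := finset_pos (M.act s) (fun μ => v s - v (g μ))
        (fun μ hμ => sub_pos.2 (hg2 μ hμ))
      exact ⟨q, δ, fun _ => ⟨hq, hδ, fun μ hμ => ⟨g μ,
        ENNReal.ofReal_le_of_le_toReal (hq' μ hμ), hδ' μ hμ⟩⟩⟩
    · exact ⟨1, 1, fun hh => absurd hh hs⟩
  choose q δ hqd using hqd
  have hfin : ∀ r, {s | s ∈ Q ∧ v s ≤ r}.Finite := by
    intro r
    obtain ⟨m, hm⟩ := exists_nat_gt r
    refine (hVsub m).subset ?_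
    rintro s ⟨⟨hs, hst⟩, hr⟩
    refine ⟨hst, ?_⟩
    have h1 : (V s).toReal < ((m : ℝ≥0∞)).toReal := by
      simpa using hr.trans_lt hm
    exact (ENNReal.toReal_lt_toReal (hVfin s hs) (ENNReal.natCast_ne_top m)).1 h1
  obtain ⟨p, hp1, hp2, hp3⟩ := exists_antitone v Q hfin q fun s hs => (hqd s hs).1
  obtain ⟨d, hd1, hd2, hd3⟩ := exists_antitone v Q hfin δ fun s hs => (hqd s hs).2.1
  refine ⟨p, d, v, fun r _ => hp1 r, fun r _ => (hd1 r).1, fun r₁ r₂ _ => hp2 r₁ r₂,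
    fun r₁ r₂ _ => hd2 r₁ r₂, by simp [v, hV0], fun s hs hst =>
    ENNReal.toReal_pos (hVpos s hs hst).ne' (hVfin s hs), ?_, ?_⟩
  · intro s hs μ hμ
    have h1 : MDP.expect μ v = (E μ V).toReal := by
      unfold MDP.expect E
      rw [ENNReal.tsum_toReal_eq]
      · simp [v, ENNReal.toReal_mul]
      · intro s'
        by_cases h0 : μ s' = 0
        · simp [h0]
        · exact ENNReal.mul_ne_top (μ.apply_ne_top _)
            (hVfin s' (hs.step μ hμ ((PMF.mem_support_iff _ _).2 h0)))
    rw [h1]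
    exact ENNReal.toReal_mono (hVfin s hs) (hVsup s μ hμ)
  · intro s hs hst μ hμ
    obtain ⟨_, _, h3⟩ := hqd s ⟨hs, hst⟩
    obtain ⟨s', h4, h5⟩ := h3 μ hμ
    refine ((ENNReal.ofReal_le_ofReal (hp3 s ⟨hs, hst⟩)).trans h4).trans ?_
    exact ENNReal.le_tsum (f := fun a : {s' | d (v s) ≤ v s - v s'} => μ a)
      ⟨s', (hd3 s ⟨hs, hst⟩).trans h5⟩
end

section
/- Completeness of the lower bounds rule: Let M be a finitely-branching MDP with absorbing terminal state ⊥ and initial state σ, and suppose Pr_term(σ) ≥ 1 − p for some p ∈ [0,1). Then for every ε > 0 there exists a finite set Ψ_ε ⊆ S with σ ∈ Ψ_ε and ⊥ ∈ Ψ_ε such that (Ψ_ε, p + ε) is a stochastic invariant for σ and, for every scheduler 𝔰, ℙ_{𝔰,σ}(the run visits ⊥ or some state of the run lies outside Ψ_ε) = 1. -/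
open scoped ENNReal Classical

namespace MDP

variable {S : Type}

/-- step-bounded minimal termination value -/
noncomputable def val (M : MDP S) (t : S) : ℕ → S → ℝ≥0∞
  | 0, s => if s = t then 1 else 0
  | k + 1, s => if s = t then 1 else (M.act s).inf fun μ => ∑' s', μ s' * val M t k s'

lemma sum_le_one' (μ : PMF S) (f : S → ℝ≥0∞) (hf : ∀ s, f s ≤ 1) : ∑' s, μ s * f s ≤ 1 := by
  calc ∑' s, μ s * f s ≤ ∑' s, μ s := ENNReal.tsum_le_tsum fun s => by
        simpa using mul_le_mul_right (hf s) (μ s)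
    _ = 1 := μ.tsum_coe

lemma sum_mono' (μ : PMF S) {f g : S → ℝ≥0∞} (h : ∀ s, f s ≤ g s) :
    ∑' s, μ s * f s ≤ ∑' s, μ s * g s :=
  ENNReal.tsum_le_tsum fun s => by gcongr; exact h s

lemma hit_le_one (M : MDP S) (𝔰 : Scheduler M) (T : Set S) (k : ℕ) :
    ∀ hist s, hitProbAux M 𝔰 T k hist s ≤ 1 := by
  induction k with
  | zero => intro hist s; simp only [hitProbAux]; split_ifs <;> simp
  | succ k ih =>
    intro hist s; simp only [hitProbAux]; split_ifs
    · exact le_rfl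
    · exact sum_le_one' _ _ fun s' => ih _ _

lemma hit_mono (M : MDP S) (𝔰 : Scheduler M) {T U : Set S} (h : T ⊆ U) (k : ℕ) :
    ∀ hist s, hitProbAux M 𝔰 T k hist s ≤ hitProbAux M 𝔰 U k hist s := by
  induction k with
  | zero =>
    intro hist s; simp only [hitProbAux]
    by_cases h1 : s ∈ T
    · simp [h1, h h1]
    · simp [h1]
  | succ k ih =>
    intro hist s
    by_cases h2 : s ∈ U
    · exact (hit_le_one ..).trans (by simp [hitProbAux, h2])
    · have h1 : s ∉ T := fun x => h2 (h x)
      simp only [hitProbAux, h1, h2, if_false]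
      exact sum_mono' _ fun s' => ih _ _

lemma val_le_hit (M : MDP S) (𝔰 : Scheduler M) (t : S) (k : ℕ) :
    ∀ hist s, val M t k s ≤ hitProbAux M 𝔰 {t} k hist s := by
  induction k with
  | zero => intro hist s; simp [val, hitProbAux]
  | succ k ih =>
    intro hist s
    simp only [val, hitProbAux, Set.mem_singleton_iff]
    split_ifs
    · exact le_rfl
    · exact (Finset.inf_le (𝔰.choose_mem hist s)).trans (sum_mono' _ fun s' => ih _ _)

lemma val_le_one (M : MDP S) (t : S) (k : ℕ) (s : S) : val M t k s ≤ 1 := by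
  let 𝔰 : Scheduler M := ⟨fun _ s => (M.act_nonempty s).choose,
    fun _ s => (M.act_nonempty s).choose_spec⟩
  exact (val_le_hit M 𝔰 t k [] s).trans (hit_le_one ..)

lemma val_succ (M : MDP S) (t : S) (k : ℕ) : ∀ s, val M t k s ≤ val M t (k+1) s := by
  induction k with
  | zero => intro s; simp only [val]; split_ifs <;> simp
  | succ k ih =>
    intro s
    rw [val, val]
    split_ifs
    · exact le_rfl
    · exact Finset.inf_mono_fun fun μ _ => sum_mono' _ ih

lemma val_mono (M : MDP S) (t s : S) : Monotone fun k => val M t k s :=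
  monotone_nat_of_le_succ fun k => val_succ M t k s

noncomputable def valInf (M : MDP S) (t s : S) : ℝ≥0∞ := ⨆ k, val M t k s

lemma valInf_le_one (M : MDP S) (t s : S) : valInf M t s ≤ 1 := iSup_le fun k => val_le_one M t k s

lemma sum_iSup (M : MDP S) (t : S) (μ : PMF S) :
    ∑' s, μ s * valInf M t s = ⨆ k, ∑' s, μ s * val M t k s := by
  simp only [valInf, ENNReal.mul_iSup]
  rw [ENNReal.tsum_eq_iSup_sum]
  simp_rw [ENNReal.tsum_eq_iSup_sum]
  rw [iSup_comm]
  congr 1; ext F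
  rw [ENNReal.finsetSum_iSup_of_monotone]
  intro s i j hij
  exact mul_le_mul_right (val_mono M t s hij) _

lemma exists_opt (M : MDP S) (t s : S) (hs : s ≠ t) :
    ∃ μ ∈ M.act s, ∑' s', μ s' * valInf M t s' ≤ valInf M t s := by
  by_contra! hc
  have h1 : ∀ μ : PMF S, ∃ k, μ ∈ M.act s → valInf M t s < ∑' s', μ s' * val M t k s' := by
    intro μ
    by_cases hμ : μ ∈ M.act s
    · have := hc μ hμ
      rw [sum_iSup, lt_iSup_iff] at this
      obtain ⟨k, hk⟩ := this
      exact ⟨k, fun _ => hk⟩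
    · exact ⟨0, fun h => absurd h hμ⟩
  choose k hk using h1
  let K := (M.act s).sup k
  have h2 : valInf M t s < val M t (K+1) s := by
    simp only [val, hs, if_false]
    rw [Finset.lt_inf_iff ((valInf_le_one M t s).trans_lt ENNReal.one_lt_top)]
    intro μ hμ
    exact (hk μ hμ).trans_le (sum_mono' _ fun s' => val_mono M t s' (Finset.le_sup hμ))
  exact absurd h2 (not_lt.2 (le_iSup (fun k => val M t k s) _))

lemma prTerm_le (M : MDP S) (t σ : S) : PrTerm M t σ ≤ valInf M t σ := by
  have h : ∀ s, ∃ μ ∈ M.act s, s ≠ t → ∑' s', μ s' * valInf M t s' ≤ valInf M t s := by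
    intro s
    by_cases hs : s = t
    · obtain ⟨μ, hμ⟩ := M.act_nonempty s
      exact ⟨μ, hμ, fun h => absurd hs h⟩
    · obtain ⟨μ, hμ, h⟩ := exists_opt M t s hs
      exact ⟨μ, hμ, fun _ => h⟩
  choose c hc hopt using h
  let 𝔰 : Scheduler M := ⟨fun _ s => c s, fun _ s => hc s⟩
  refine (iInf_le _ 𝔰).trans (iSup_le fun k => ?_)
  have : ∀ k hist s, hitProbAux M 𝔰 {t} k hist s ≤ valInf M t s := by
    intro k
    induction k with
    | zero =>
      intro hist s
      exact le_trans (by simp [val, hitProbAux]) (le_iSup (fun k => val M t k s) 0)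
    | succ k ih =>
      intro hist s
      by_cases hs : s = t
      · exact le_trans (by simp [val, hitProbAux, hs]) (le_iSup (fun k => val M t k s) 0)
      · simp only [hitProbAux, Set.mem_singleton_iff, hs, if_false]
        exact (sum_mono' _ fun s' => ih _ s').trans (hopt s hs)
  exact this k [] σ

/-- states reachable within i steps -/
def rch (M : MDP S) (σ : S) : ℕ → Set S
  | 0 => {σ}
  | i + 1 => rch M σ i ∪ ⋃ s ∈ rch M σ i, ⋃ μ ∈ M.act s, (μ : PMF S).support

lemma rch_finite (M : MDP S) (σ : S) (i : ℕ) : (rch M σ i).Finite := by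
  induction i with
  | zero => exact Set.finite_singleton _
  | succ i ih =>
    refine ih.union (ih.biUnion fun s _ => ?_)
    exact (M.act s).finite_toSet.biUnion fun μ hμ => M.act_finSupp s μ hμ

lemma rch_mono (M : MDP S) (σ : S) : Monotone (rch M σ) :=
  monotone_nat_of_le_succ fun _ => Set.subset_union_left

lemma hit_term (M : MDP S) (𝔰 : Scheduler M) (t : S) (hterm : M.Absorbing t) (T : Set S)
    (ht : t ∉ T) (n : ℕ) : ∀ hist, hitProbAux M 𝔰 T n hist t = 0 := by
  induction n with
  | zero => intro hist; simp [hitProbAux, ht]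
  | succ n ih =>
    intro hist
    have h : 𝔰.choose hist t = PMF.pure t := by
      have := 𝔰.choose_mem hist t
      rw [hterm] at this
      simpa using this
    simp only [hitProbAux, ht, if_false, h, ENNReal.tsum_eq_zero]
    intro s'
    by_cases hs : s' = t
    · subst hs; simp [ih]
    · simp [PMF.pure_apply, hs]

lemma hit_add_val (M : MDP S) (𝔰 : Scheduler M) (t σ : S) (hterm : M.Absorbing t) (k : ℕ)
    (Ψ : Set S) (hΨ : Ψ = {t} ∪ {s | s ∈ rch M σ k ∧ valInf M t s ≠ 0}) (j : ℕ) :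
    ∀ i, i + j = k → ∀ n hist, ∀ s ∈ rch M σ i,
      hitProbAux M 𝔰 Ψᶜ n hist s + val M t j s ≤ 1 := by
  have htm : ∀ n hist j, hitProbAux M 𝔰 Ψᶜ n hist t + val M t j t ≤ 1 := by
    intro n hist j
    rw [hit_term M 𝔰 t hterm _ (by simp [hΨ]), zero_add]
    exact val_le_one ..
  induction j with
  | zero =>
    intro i _ n hist s _
    by_cases h : s = t
    · rw [h]; exact htm ..
    · simpa [val, h] using hit_le_one ..
  | succ j ih =>
    intro i hi n hist s hs
    by_cases h : s = t
    · rw [h]; exact htm ..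
    by_cases hsΨ : s ∈ Ψ
    · cases n with
      | zero => simpa [hitProbAux, hsΨ] using val_le_one ..
      | succ n =>
        have hm := 𝔰.choose_mem hist s
        simp only [hitProbAux, val, h, Set.mem_compl_iff, hsΨ, not_true, if_false]
        refine (add_le_add_right (Finset.inf_le hm) _).trans ?_
        rw [← ENNReal.tsum_add, ← (𝔰.choose hist s).tsum_coe]
        refine ENNReal.tsum_le_tsum fun s' => ?_
        by_cases h0 : 𝔰.choose hist s s' = 0
        · simp [h0]
        rw [← mul_add]
        have : s' ∈ rch M σ (i+1) := by
          right
          simp only [Set.mem_iUnion]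
          exact ⟨s, hs, _, hm, h0⟩
        simpa using mul_le_mul_right (ih (i+1) (by omega) n (hist ++ [s]) s' this)
          (𝔰.choose hist s s')
    · have h0 : valInf M t s = 0 := by
        by_contra h0
        exact hsΨ (by rw [hΨ]; exact Or.inr ⟨rch_mono M σ (by omega) hs, h0⟩)
      have : val M t (j+1) s = 0 := by
        have := le_iSup (fun k => val M t k s) (j+1)
        exact le_antisymm (this.trans h0.le) bot_le
      rw [this, add_zero]; exact hit_le_one ..

lemma hit_boost (M : MDP S) (𝔰 : Scheduler M) (T : Set S) (c : ℝ≥0∞) (hc : c ≤ 1) (a : ℕ)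
    (h : ∀ hist s, c ≤ hitProbAux M 𝔰 T a hist s) (b : ℕ) :
    ∀ hist s, (1 - c) * hitProbAux M 𝔰 T b hist s + c ≤ hitProbAux M 𝔰 T (b + a) hist s := by
  have hT : ∀ b hist s, s ∈ T → hitProbAux M 𝔰 T b hist s = 1 := by
    intro b hist s hs; cases b <;> simp [hitProbAux, hs]
  induction b with
  | zero =>
    intro hist s
    by_cases hs : s ∈ T
    · rw [hT _ _ _ hs, hT _ _ _ hs, mul_one, tsub_add_cancel_of_le hc]
    · simpa [hitProbAux, hs] using h hist s
  | succ b ih =>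
    intro hist s
    by_cases hs : s ∈ T
    · rw [hT _ _ _ hs, hT _ _ _ hs, mul_one, tsub_add_cancel_of_le hc]
    · rw [show b + 1 + a = (b + a) + 1 by omega]
      simp only [hitProbAux, hs, if_false]
      refine le_trans (le_of_eq ?_) (sum_mono' _ fun s' => ih (hist ++ [s]) s')
      simp_rw [mul_add]
      rw [ENNReal.tsum_add, ENNReal.tsum_mul_right, PMF.tsum_coe, one_mul, ← ENNReal.tsum_mul_left]
      congr 2; ext s'; ring

end MDP

open MDP in
theorem lower_bound_rule_complete {S : Type} [Countable S] (M : MDP S) (term σ : S)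
    (hterm : M.Absorbing term)
    (p : ℝ) (hp0 : 0 ≤ p) (hp1 : p < 1)
    (hlb : ENNReal.ofReal (1 - p) ≤ M.PrTerm term σ) :
    ∀ ε : ℝ, 0 < ε → ∃ Ψ : Set S, Ψ.Finite ∧ σ ∈ Ψ ∧ term ∈ Ψ ∧
      M.StochasticInvariant σ Ψ (p + ε) ∧
      ∀ 𝔰 : Scheduler M, M.hitProb 𝔰 σ ({term} ∪ Ψᶜ) = 1 := by
  intro ε hε
  have hv : ENNReal.ofReal (1 - p) ≤ valInf M term σ := hlb.trans (prTerm_le ..)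
  have hlt : ENNReal.ofReal (1 - p - ε) < valInf M term σ :=
    lt_of_lt_of_le ((ENNReal.ofReal_lt_ofReal_iff (by linarith)).2 (by linarith)) hv
  obtain ⟨k, hk⟩ := lt_iSup_iff.1 hlt
  obtain ⟨Ψ, hΨ⟩ : ∃ Ψ : Set S, Ψ = {term} ∪ {s | s ∈ rch M σ k ∧ valInf M term s ≠ 0} :=
    ⟨_, rfl⟩
  have hfin : Ψ.Finite := by
    rw [hΨ]
    exact (Set.finite_singleton _).union ((rch_finite M σ k).subset fun s hs => hs.1)
  refine ⟨Ψ, hfin, ?_, by simp [hΨ], ?_, ?_⟩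
  · rw [hΨ]
    refine Or.inr ⟨rch_mono M σ (Nat.zero_le k) rfl, ?_⟩
    exact (bot_le.trans_lt hlt).ne'
  · refine iSup_le fun 𝔰 => iSup_le fun n => ?_
    have h := hit_add_val M 𝔰 term σ hterm k Ψ hΨ k 0 (by simp) n [] σ rfl
    have h1 : hitProbAux M 𝔰 Ψᶜ n [] σ + ENNReal.ofReal (1 - p - ε) ≤ 1 :=
      (add_le_add_right hk.le _).trans h
    have h2 : (1 : ℝ≥0∞) ≤ ENNReal.ofReal (p + ε) + ENNReal.ofReal (1 - p - ε) := by
      rw [← ENNReal.ofReal_one]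
      refine le_trans (ENNReal.ofReal_le_ofReal (by linarith)) ENNReal.ofReal_add_le
    exact (ENNReal.add_le_add_iff_right ENNReal.ofReal_ne_top).1 (h1.trans h2)
  · intro 𝔰
    -- uniform positive lower bound
    have hpos : ∀ s, ∃ m, s ∈ Ψ → 0 < val M term m s := by
      intro s
      by_cases hs : s ∈ Ψ
      · have : 0 < valInf M term s := by
          rw [hΨ] at hs
          rcases hs with hs | hs
          · have hs : s = term := hs
            exact lt_of_lt_of_le (by simp [val, hs]) (le_iSup (fun k => val M term k s) 0)
          · exact pos_iff_ne_zero.2 hs.2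
        obtain ⟨m, hm⟩ := lt_iSup_iff.1 this
        exact ⟨m, fun _ => hm⟩
      · exact ⟨0, fun h => absurd h hs⟩
    choose m hm using hpos
    let N := hfin.toFinset.sup m
    let c : ℝ≥0∞ := 1 ⊓ hfin.toFinset.inf fun s => val M term N s
    have hc1 : c ≤ 1 := inf_le_left
    have hc0 : 0 < c := by
      refine lt_inf_iff.2 ⟨one_pos, (Finset.lt_inf_iff ENNReal.zero_lt_top).2 fun s hs => ?_⟩
      exact (hm s (hfin.mem_toFinset.1 hs)).trans_le (val_mono M term s (Finset.le_sup hs))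
    obtain ⟨T, hT⟩ : ∃ T : Set S, T = {term} ∪ Ψᶜ := ⟨_, rfl⟩
    rw [← hT]
    have hc : ∀ hist s, c ≤ hitProbAux M 𝔰 T N hist s := by
      intro hist s
      by_cases hs : s ∈ Ψ
      · have h1 : c ≤ val M term N s :=
          inf_le_right.trans (Finset.inf_le (hfin.mem_toFinset.2 hs))
        refine h1.trans ((val_le_hit M 𝔰 term N hist s).trans (hit_mono M 𝔰 ?_ N hist s))
        rw [hT]; exact Set.subset_union_left
      · have hsT : s ∈ T := by rw [hT]; exact Or.inr hs
        refine hc1.trans (le_of_eq ?_)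
        cases N <;> simp [hitProbAux, hsT]
    have hle : M.hitProb 𝔰 σ T ≤ 1 := iSup_le fun n => hit_le_one ..
    have key : (1 - c) * M.hitProb 𝔰 σ T + c ≤ M.hitProb 𝔰 σ T := by
      conv_lhs => rw [hitProb, ENNReal.mul_iSup, ENNReal.iSup_add]
      refine iSup_le fun b => (hit_boost M 𝔰 T c hc1 N hc b [] σ).trans ?_
      exact le_iSup (fun n => hitProbWithin M 𝔰 σ T n) (b + N)
    refine le_antisymm hle ?_
    generalize M.hitProb 𝔰 σ T = h at hle key
    have hcT : c ≠ ⊤ := (hc1.trans_lt ENNReal.one_lt_top).ne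
    have hhT : h ≠ ⊤ := (hle.trans_lt ENNReal.one_lt_top).ne
    have e : h = (1 - c) * h + c * h := by
      rw [← add_mul, tsub_add_cancel_of_le hc1, one_mul]
    have k2 : (1 - c) * h + c ≤ (1 - c) * h + c * h := e ▸ key
    have k3 : c * 1 ≤ c * h := by
      rw [mul_one]
      exact (ENNReal.add_le_add_iff_left (ENNReal.mul_ne_top (by simp) hhT)).1 k2
    exact (ENNReal.mul_le_mul_iff_right hc0.ne' hcT).1 k3
end
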